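/- arXiv:1408.6210 — 6 statements merged into one kernel-verified Lean document; each statement's English description precedes it below -/
import Mathlib

section
/- Let (P, ω) be a finite weighted point cloud in ℝ^d with nonnegative weights, δ_P its power distance, and R > 0. Then for any integrable probe function χ : ℝ^d → [0,∞), one has V_{δ_P,R}(χ) = Σ_{p∈P} χ(p) M_p, where M_p := ∫_{C_p} (x − p) ⊗ (x − p) dx and C_p := Pow_P(p) ∩ B̄(p, (R² − ω_p)^{1/2}) (the ball being empty when R² − ω_p < 0). -/
open MeasureTheory Metric Filter
open scoped NNReal ENNReal

noncomputable section

abbrev Euc (d : ℕ) := EuclideanSpace ℝ (Fin d)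

/-- Power distance of a weighted point cloud. -/
def powerDist {d : ℕ} (P : Finset (Euc d)) (ω : Euc d → ℝ) (x : Euc d) : ℝ :=
  Real.sqrt (sInf ((fun p => ‖x - p‖ ^ 2 + ω p) '' (P : Set (Euc d))))

/-- Power cell of `p`. -/
def powerCell {d : ℕ} (P : Finset (Euc d)) (ω : Euc d → ℝ) (p : Euc d) : Set (Euc d) :=
  {x | ∀ q ∈ P, ‖x - p‖ ^ 2 + ω p ≤ ‖x - q‖ ^ 2 + ω q}

def nvec {d : ℕ} (δ : Euc d → ℝ) (x : Euc d) : Euc d :=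
  (1 / 2 : ℝ) • gradient (fun y => δ y ^ 2) x

def tensor {d : ℕ} (v w : Euc d) : Euc d →L[ℝ] Euc d :=
  (ContinuousLinearMap.toSpanSingleton ℝ v).comp (innerSL ℝ w)

def VCM {d : ℕ} (δ : Euc d → ℝ) (R : ℝ) (χ : Euc d → ℝ) : Euc d →L[ℝ] Euc d :=
  ∫ x in {y : Euc d | δ y ≤ R}, χ (x - nvec δ x) • tensor (nvec δ x) (nvec δ x)

/-!
A power cell is an intersection of half-spaces, hence convex, so its frontier is Lebesgue-null.
On the interior of the cell of `p` the squared power distance is `‖x - p‖ ^ 2 + ω p`, so there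
`n_δ(x) = x - p` and the probe is evaluated at `x - n_δ(x) = p`; on the whole cell, `δ ≤ R` says
`‖x - p‖ ^ 2 ≤ R ^ 2 - ω p`. The cells overlap only on a null set: near a common interior point `x`
of the cells of `p` and `q` the functions `‖y - p‖ ^ 2 + ω p` and `‖y - q‖ ^ 2 + ω q` agree, so
their gradients `2 (x - p)` and `2 (x - q)` at `x` are equal, and `p = q`.
-/

section InnerProductSpace

variable {E : Type*} [NormedAddCommGroup E] [InnerProductSpace ℝ E]

theorem hasGradientAt_norm_sub_sq_add_const [CompleteSpace E] (p : E) (c : ℝ) (x : E) :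
    HasGradientAt (fun y => ‖y - p‖ ^ 2 + c) ((2 : ℝ) • (x - p)) x := by
  rw [hasGradientAt_iff_hasFDerivAt]
  refine (((hasFDerivAt_id x).sub_const p).norm_sq.add_const c).congr_fderiv ?_
  ext v
  simp [InnerProductSpace.toDual_apply_apply]

theorem convex_setOf_norm_sub_sq_add_le (p q : E) (a b : ℝ) :
    Convex ℝ {x : E | ‖x - p‖ ^ 2 + a ≤ ‖x - q‖ ^ 2 + b} := by
  have halfSpace : {x : E | ‖x - p‖ ^ 2 + a ≤ ‖x - q‖ ^ 2 + b} =
      {x : E | innerₛₗ ℝ (q - p) x ≤ (‖q‖ ^ 2 + b - ‖p‖ ^ 2 - a) / 2} := by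
    ext x
    simp only [Set.mem_ofPred_eq, innerₛₗ_apply_apply, norm_sub_sq_real, inner_sub_left,
      real_inner_comm x]
    constructor <;> intro h <;> linarith
  rw [halfSpace]
  exact convex_halfSpace_le (innerₛₗ ℝ (q - p)).isLinear _

end InnerProductSpace

theorem integral_biUnion_finset_of_aedisjoint {X ι F : Type*} [MeasurableSpace X] {μ : Measure X}
    [NormedAddCommGroup F] [NormedSpace ℝ F] {f : X → F} {s : ι → Set X} (t : Finset ι)
    (hs : ∀ i ∈ t, NullMeasurableSet (s i) μ)
    (hd : (t : Set ι).Pairwise fun i j => AEDisjoint μ (s i) (s j))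
    (hf : ∀ i ∈ t, IntegrableOn f (s i) μ) :
    ∫ x in ⋃ i ∈ t, s i, f x ∂μ = ∑ i ∈ t, ∫ x in s i, f x ∂μ := by
  have hint : IntegrableOn f (⋃ i : t, s i) μ := integrableOn_finite_iUnion.2 fun i => hf i i.2
  have hunion : ⋃ i ∈ t, s i = ⋃ i : t, s i := Set.biUnion_eq_iUnion (t : Set ι) fun i _ => s i
  rw [hunion, integral_iUnion_ae (fun i : t => hs i i.2)
    (fun i j hij => hd i.2 j.2 (Subtype.coe_ne_coe.2 hij)) hint, tsum_fintype]
  exact Finset.sum_coe_sort t fun i => ∫ x in s i, f x ∂μ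

theorem continuous_tensor_self {d : ℕ} : Continuous fun v : Euc d => tensor v v :=
  (ContinuousLinearMap.toSpanSingletonCLE (𝕜 := ℝ) (E := Euc d)).continuous.clm_comp
    (innerSL ℝ).continuous

section PowerCell

variable {d : ℕ} {P : Finset (Euc d)} {ω : Euc d → ℝ} {p q x : Euc d}

theorem powerCell_eq_biInter (P : Finset (Euc d)) (ω : Euc d → ℝ) (p : Euc d) :
    powerCell P ω p = ⋂ q ∈ P, {x | ‖x - p‖ ^ 2 + ω p ≤ ‖x - q‖ ^ 2 + ω q} := by
  ext x
  simp only [powerCell, Set.mem_ofPred_eq, Set.mem_iInter]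

theorem isClosed_powerCell : IsClosed (powerCell P ω p) := by
  rw [powerCell_eq_biInter]
  exact isClosed_biInter fun q _ => isClosed_le (by fun_prop) (by fun_prop)

theorem convex_powerCell : Convex ℝ (powerCell P ω p) := by
  rw [powerCell_eq_biInter]
  exact convex_iInter₂ fun q _ => convex_setOf_norm_sub_sq_add_le p q (ω p) (ω q)

theorem interior_powerCell_ae_eq : interior (powerCell P ω p) =ᵐ[volume] powerCell P ω p :=
  interior_ae_eq_of_null_frontier (convex_powerCell.addHaar_frontier volume)

theorem exists_mem_powerCell (hP : P.Nonempty) (ω : Euc d → ℝ) (x : Euc d) :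
    ∃ p ∈ P, x ∈ powerCell P ω p :=
  P.exists_min_image (fun p => ‖x - p‖ ^ 2 + ω p) hP

theorem disjoint_interior_powerCell (hp : p ∈ P) (hq : q ∈ P) (hpq : p ≠ q) :
    Disjoint (interior (powerCell P ω p)) (interior (powerCell P ω q)) := by
  refine Set.disjoint_left.2 fun x hxp hxq => hpq ?_
  have heq : (fun y => ‖y - p‖ ^ 2 + ω p) =ᶠ[nhds x] fun y => ‖y - q‖ ^ 2 + ω q := by
    filter_upwards [mem_interior_iff_mem_nhds.1 hxp, mem_interior_iff_mem_nhds.1 hxq] with y hyp hyq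
    exact le_antisymm (hyp q hq) (hyq p hp)
  have hgrad : (2 : ℝ) • (x - p) = (2 : ℝ) • (x - q) :=
    (hasGradientAt_norm_sub_sq_add_const p (ω p) x).unique
      ((hasGradientAt_norm_sub_sq_add_const q (ω q) x).congr_of_eventuallyEq heq)
  exact sub_right_injective (smul_right_injective _ two_ne_zero hgrad)

theorem aedisjoint_powerCell (hp : p ∈ P) (hq : q ∈ P) (hpq : p ≠ q) :
    AEDisjoint volume (powerCell P ω p) (powerCell P ω q) :=
  (disjoint_interior_powerCell hp hq hpq).aedisjoint.congr
    interior_powerCell_ae_eq.symm interior_powerCell_ae_eq.symm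

theorem powerDist_sq_of_mem_powerCell (hp : p ∈ P) (hωp : 0 ≤ ω p) (hx : x ∈ powerCell P ω p) :
    powerDist P ω x ^ 2 = ‖x - p‖ ^ 2 + ω p := by
  have hmin : IsLeast ((fun q => ‖x - q‖ ^ 2 + ω q) '' (P : Set (Euc d))) (‖x - p‖ ^ 2 + ω p) :=
    ⟨Set.mem_image_of_mem _ hp, Set.forall_mem_image.2 hx⟩
  rw [powerDist, hmin.csInf_eq, Real.sq_sqrt (by positivity)]

theorem nvec_powerDist_of_mem_interior (hp : p ∈ P) (hωp : 0 ≤ ω p)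
    (hx : x ∈ interior (powerCell P ω p)) : nvec (powerDist P ω) x = x - p := by
  have heq : (fun y => powerDist P ω y ^ 2) =ᶠ[nhds x] fun y => ‖y - p‖ ^ 2 + ω p := by
    filter_upwards [mem_interior_iff_mem_nhds.1 hx] with y hy
    exact powerDist_sq_of_mem_powerCell hp hωp hy
  have hgrad := (hasGradientAt_norm_sub_sq_add_const p (ω p) x).congr_of_eventuallyEq heq
  rw [nvec, hgrad.gradient, smul_smul, one_div_mul_cancel two_ne_zero, one_smul]

theorem ae_nvec_powerDist_eq (hp : p ∈ P) (hωp : 0 ≤ ω p) :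
    ∀ᵐ x ∂volume.restrict (powerCell P ω p), nvec (powerDist P ω) x = x - p := by
  rw [← Measure.restrict_congr_set interior_powerCell_ae_eq]
  filter_upwards [ae_restrict_mem isOpen_interior.measurableSet] with x hx
  exact nvec_powerDist_of_mem_interior hp hωp hx

/-- The cell `C_p` of the paper: the part of the power cell of `p` on which the power distance is
at most `R`. The ball of radius `(R ^ 2 - ω p) ^ (1 / 2)` is written without the square root, so
that it is empty when `R ^ 2 < ω p`. -/
def truncatedPowerCell (P : Finset (Euc d)) (ω : Euc d → ℝ) (R : ℝ) (p : Euc d) : Set (Euc d) :=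
  powerCell P ω p ∩ {x | ‖x - p‖ ^ 2 ≤ R ^ 2 - ω p}

variable {R : ℝ}

theorem isCompact_truncatedPowerCell : IsCompact (truncatedPowerCell P ω R p) := by
  have hclosed : IsClosed (truncatedPowerCell P ω R p) :=
    isClosed_powerCell.inter (isClosed_le (by fun_prop) (by fun_prop))
  refine (isCompact_closedBall p √(R ^ 2 - ω p)).of_isClosed_subset hclosed fun x hx => ?_
  rw [mem_closedBall, dist_eq_norm]
  exact Real.le_sqrt_of_sq_le hx.2

theorem powerDist_le_iff (hp : p ∈ P) (hωp : 0 ≤ ω p) (hR : 0 ≤ R) (hx : x ∈ powerCell P ω p) :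
    powerDist P ω x ≤ R ↔ ‖x - p‖ ^ 2 ≤ R ^ 2 - ω p := by
  have hnonneg : 0 ≤ powerDist P ω x := Real.sqrt_nonneg _
  rw [← sq_le_sq₀ hnonneg hR, powerDist_sq_of_mem_powerCell hp hωp hx,
    le_sub_iff_add_le]

theorem setOf_powerDist_le_eq_biUnion (hP : P.Nonempty) (hω : ∀ p ∈ P, 0 ≤ ω p) (hR : 0 ≤ R) :
    {x | powerDist P ω x ≤ R} = ⋃ p ∈ P, truncatedPowerCell P ω R p := by
  ext x
  simp only [Set.mem_ofPred_eq, Set.mem_iUnion, exists_prop]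
  constructor
  · intro hx
    obtain ⟨p, hp, hxp⟩ := exists_mem_powerCell hP ω x
    exact ⟨p, hp, hxp, (powerDist_le_iff hp (hω p hp) hR hxp).1 hx⟩
  · rintro ⟨p, hp, hxp, hball⟩
    exact (powerDist_le_iff hp (hω p hp) hR hxp).2 hball

theorem setIntegral_powerDist_le_comp_nvec {F : Type*} [NormedAddCommGroup F] [NormedSpace ℝ F]
    (hP : P.Nonempty) (hω : ∀ p ∈ P, 0 ≤ ω p) (hR : 0 ≤ R) {f : Euc d → Euc d → F}
    (hf : ∀ p ∈ P, IntegrableOn (fun x => f p (x - p)) (truncatedPowerCell P ω R p)) :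
    ∫ x in {y | powerDist P ω y ≤ R}, f (x - nvec (powerDist P ω) x) (nvec (powerDist P ω) x) =
      ∑ p ∈ P, ∫ x in truncatedPowerCell P ω R p, f p (x - p) := by
  have hfn : ∀ p ∈ P, (fun x => f (x - nvec (powerDist P ω) x) (nvec (powerDist P ω) x))
      =ᵐ[volume.restrict (truncatedPowerCell P ω R p)] fun x => f p (x - p) := fun p hp => by
    filter_upwards [ae_restrict_of_ae_restrict_of_subset Set.inter_subset_left
      (ae_nvec_powerDist_eq hp (hω p hp))] with x hx
    rw [hx, sub_sub_cancel]
  rw [setOf_powerDist_le_eq_biUnion hP hω hR, integral_biUnion_finset_of_aedisjoint]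
  · exact Finset.sum_congr rfl fun p hp => integral_congr_ae (hfn p hp)
  · exact fun p _ => isCompact_truncatedPowerCell.measurableSet.nullMeasurableSet
  · exact fun p hp q hq hpq =>
      (aedisjoint_powerCell hp hq hpq).mono Set.inter_subset_left Set.inter_subset_left
  · exact fun p hp => (hf p hp).congr (hfn p hp).symm

end PowerCell

theorem stmt0_general {d : ℕ} (P : Finset (Euc d)) (hP : P.Nonempty)
    (ω : Euc d → ℝ) (hω : ∀ p ∈ P, 0 ≤ ω p) (R : ℝ) (hR : 0 ≤ R) (χ : Euc d → ℝ) :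
    VCM (powerDist P ω) R χ =
      ∑ p ∈ P, χ p • ∫ x in truncatedPowerCell P ω R p, tensor (x - p) (x - p) := by
  have hcont : ∀ p : Euc d, Continuous fun x => χ p • tensor (x - p) (x - p) := fun p =>
    (continuous_tensor_self.comp (continuous_sub_right p)).const_smul (χ p)
  have hsum := setIntegral_powerDist_le_comp_nvec (f := fun q v => χ q • tensor v v) hP hω hR
    fun p _ => (hcont p).continuousOn.integrableOn_compact isCompact_truncatedPowerCell
  simpa only [VCM, integral_smul] using hsum

theorem stmt0 {d : ℕ} (P : Finset (Euc d)) (hP : P.Nonempty)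
    (ω : Euc d → ℝ) (hω : ∀ p ∈ P, 0 ≤ ω p) (R : ℝ) (hR : 0 < R)
    (χ : Euc d → ℝ) (hχ0 : ∀ x, 0 ≤ χ x) (hχint : Integrable χ) :
    VCM (powerDist P ω) R χ =
      ∑ p ∈ P, χ p •
        ∫ x in powerCell P ω p ∩ {x : Euc d | ‖x - p‖ ^ 2 ≤ R ^ 2 - ω p},
          tensor (x - p) (x - p) :=
  stmt0_general P hP ω hω R hR.le χ
end
end

section
/- There is a constant C₃ depending only on the dimension d such that the following holds. Let E ⊂ ℝ^d be a bounded open set with rectifiable boundary and ε > 0. For any two distance-like functions δ, δ' on ℝ^d with sup_{x∈E}|δ(x) − δ'(x)| ≤ ε, one has ∫_E ‖n_{δ'}(x) − n_δ(x)‖ dx ≤ C₃ [H^d(E) + (2 diam(E) + 4R + (2Rε)^{1/2}) H^{d−1}(∂E)] (2Rε)^{1/2}, where R := max(sup_{x∈E} δ(x), sup_{x∈E} δ'(x)). -/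
open MeasureTheory Metric Filter
open scoped NNReal ENNReal

noncomputable section

/-- A function `δ : ℝ^d → [0,∞)` is distance-like if it is nonnegative, proper
and `δ²` is 1-semiconcave, i.e. `x ↦ ‖x‖² - δ x ^ 2` is convex. -/
def DistanceLike {d : ℕ} (δ : Euc d → ℝ) : Prop :=
  (∀ x, 0 ≤ δ x) ∧
  Tendsto δ (comap (fun x : Euc d => ‖x‖) atTop) atTop ∧
  ConvexOn ℝ Set.univ (fun x : Euc d => ‖x‖ ^ 2 - δ x ^ 2)

/-- A set `s ⊆ ℝ^d` is a rectifiable boundary-type set if it is `(d-1)`-rectifiable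
(covered, up to an `H^{d-1}`-null set, by countably many Lipschitz images of `ℝ^{d-1}`)
and has finite `H^{d-1}` measure. -/
def RectifiableCodimOne (d : ℕ) (s : Set (Euc d)) : Prop :=
  μH[(d - 1 : ℝ)] s < ⊤ ∧
  ∃ f : ℕ → (EuclideanSpace ℝ (Fin (d - 1)) → Euc d),
    (∀ n, ∃ K : ℝ≥0, LipschitzWith K (f n)) ∧
    μH[(d - 1 : ℝ)] (s \ ⋃ n, Set.range (f n)) = 0

/-
Write `f = -δ²` and `g = -δ'²`; both become convex after adding `‖x‖²`. First-order convexity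
inequalities at `x` and at `x + v` bound `|f'(x) v - g'(x) v|` by the increments of `f' v` and
`g' v` from `x` to `x + v`, plus an error of order `η + ‖v‖²` where `|f - g| ≤ η` on `E`. Integrated
over the points `x` of `E` with `x + v ∈ E`, the increments telescope: what remains is controlled by
the volume of the points that the shift by `v` moves out of `E`. Those points lie in the region that
`∂E` sweeps out along a segment parallel to `v`, whose volume is at most `‖v‖ H^{d-1}(∂E)`. Since
`‖f'‖, ‖g'‖ ≤ 2R` on `E`, taking `‖v‖ = √η` with `η = 2Rε` balances the two error terms.
-/

section FirstOrder

variable {V : Type*} [NormedAddCommGroup V] {s : Set V} {f g : V → ℝ} {m : ℝ}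

lemma tangent_le_of_convexOn [NormedSpace ℝ V] {x y : V} (hf : ConvexOn ℝ s f)
    (hx : x ∈ s) (hy : y ∈ s) (hfx : DifferentiableAt ℝ f x) :
    f x + fderiv ℝ f x (y - x) ≤ f y := by
  set line : ℝ →ᵃ[ℝ] V := AffineMap.lineMap x y
  have hderiv : HasDerivAt (f ∘ line) (fderiv ℝ f x (y - x)) 0 := by
    refine HasFDerivAt.comp_hasDerivAt (0 : ℝ) ?_ AffineMap.hasDerivAt_lineMap
    simpa [line] using hfx.hasFDerivAt
  have hslope := (hf.comp_affineMap line).le_slope_of_hasDerivAt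
    (by simpa [line] using hx) (by simpa [line] using hy) one_pos hderiv
  simp only [slope_def_field, Function.comp_apply, line, AffineMap.lineMap_apply_one,
    AffineMap.lineMap_apply_zero] at hslope
  linarith

variable [InnerProductSpace ℝ V]

lemma tangent_add_sq_le_of_strongConvexOn {x y : V} (hf : StrongConvexOn s m f)
    (hx : x ∈ s) (hy : y ∈ s) (hfx : DifferentiableAt ℝ f x) :
    f x + fderiv ℝ f x (y - x) + m / 2 * ‖y - x‖ ^ 2 ≤ f y := by
  have hsq : HasFDerivAt (fun z : V => m / 2 * ‖z‖ ^ 2) ((m / 2) • 2 • innerSL ℝ x) x :=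
    (hasStrictFDerivAt_norm_sq x).hasFDerivAt.const_mul (m / 2)
  have htangent := tangent_le_of_convexOn (strongConvexOn_iff_convex.1 hf) hx hy
    (hfx.sub hsq.differentiableAt)
  rw [fderiv_fun_sub hfx hsq.differentiableAt, hsq.fderiv] at htangent
  simp only [sub_apply, smul_apply, innerSL_apply_apply, smul_eq_mul,
    nsmul_eq_mul, Nat.cast_ofNat] at htangent
  have hnorm : ‖y‖ ^ 2 = ‖x‖ ^ 2 + 2 * inner ℝ x (y - x) + ‖y - x‖ ^ 2 := by
    simpa using norm_add_sq_real x (y - x)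
  rw [hnorm] at htangent
  linarith

lemma abs_fderiv_sub_le_of_strongConvexOn {x v : V} {η : ℝ}
    (hf : StrongConvexOn s m f) (hg : StrongConvexOn s m g) (hx : x ∈ s) (hxv : x + v ∈ s)
    (hfx : DifferentiableAt ℝ f x) (hfxv : DifferentiableAt ℝ f (x + v))
    (hgx : DifferentiableAt ℝ g x) (hgxv : DifferentiableAt ℝ g (x + v))
    (hfg : |f x - g x| ≤ η) (hfgv : |f (x + v) - g (x + v)| ≤ η) :
    |fderiv ℝ f x v - fderiv ℝ g x v| ≤
      (fderiv ℝ f (x + v) v - fderiv ℝ f x v) + (fderiv ℝ g (x + v) v - fderiv ℝ g x v) +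
        (2 * η - 2 * m * ‖v‖ ^ 2) := by
  have forward {φ : V → ℝ} (hφ : StrongConvexOn s m φ) (hφx : DifferentiableAt ℝ φ x) :
      fderiv ℝ φ x v + m / 2 * ‖v‖ ^ 2 ≤ φ (x + v) - φ x := by
    have := tangent_add_sq_le_of_strongConvexOn hφ hx hxv hφx
    rw [add_sub_cancel_left] at this
    linarith
  have backward {φ : V → ℝ} (hφ : StrongConvexOn s m φ) (hφxv : DifferentiableAt ℝ φ (x + v)) :
      φ (x + v) - φ x + m / 2 * ‖v‖ ^ 2 ≤ fderiv ℝ φ (x + v) v := by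
    have := tangent_add_sq_le_of_strongConvexOn hφ hxv hx hφxv
    rw [sub_add_cancel_left, map_neg, norm_neg] at this
    linarith
  have hf₁ := forward hf hfx
  have hf₂ := backward hf hfxv
  have hg₁ := forward hg hgx
  have hg₂ := backward hg hgxv
  rw [abs_le] at hfg hfgv ⊢
  constructor <;> linarith

lemma norm_fderiv_sq_le_of_strongConvexOn_neg [CompleteSpace V] {x : V} {c M : ℝ} (hc : 0 < c)
    (hf : StrongConvexOn Set.univ (-c) f) (hM : ∀ y, f y ≤ M) (hfx : DifferentiableAt ℝ f x) :
    ‖fderiv ℝ f x‖ ^ 2 ≤ 2 * c * (M - f x) := by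
  have hnorm : ‖gradient f x‖ = ‖fderiv ℝ f x‖ := LinearIsometryEquiv.norm_map _ _
  have hstep := (tangent_add_sq_le_of_strongConvexOn (y := x + c⁻¹ • gradient f x) hf
    (Set.mem_univ _) (Set.mem_univ _) hfx).trans (hM _)
  rw [add_sub_cancel_left, map_smul, ← inner_gradient_left, real_inner_self_eq_norm_sq, norm_smul,
    hnorm, Real.norm_of_nonneg (inv_nonneg.2 hc.le), smul_eq_mul] at hstep
  field_simp at hstep
  linarith

end FirstOrder

section Rademacher

variable {V : Type*} [NormedAddCommGroup V] [MeasurableSpace V] [BorelSpace V]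

lemma ae_differentiableAt_of_locallyLipschitz [NormedSpace ℝ V] [FiniteDimensional ℝ V]
    {W : Type*} [NormedAddCommGroup W] [NormedSpace ℝ W] [FiniteDimensional ℝ W]
    (μ : Measure V) [μ.IsAddHaarMeasure] {f : V → W} (hf : LocallyLipschitz f) :
    ∀ᵐ x ∂μ, DifferentiableAt ℝ f x := by
  rw [ae_iff]
  refine measure_null_of_locally_null _ fun x _ => ?_
  obtain ⟨K, t, ht, hK⟩ := hf x
  obtain ⟨u, hut, hu, hxu⟩ := _root_.mem_nhds_iff.1 ht
  refine ⟨_, inter_mem_nhdsWithin _ (hu.mem_nhds hxu), ?_⟩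
  refine measure_mono_null ?_ ((hK.mono hut).ae_differentiableWithinAt_of_mem (μ := μ))
  rintro y ⟨hy, hyu⟩ hwithin
  exact hy ((hwithin hyu).differentiableAt (hu.mem_nhds hyu))

lemma ae_differentiableAt_of_strongConvexOn [InnerProductSpace ℝ V] [FiniteDimensional ℝ V]
    (μ : Measure V) [μ.IsAddHaarMeasure] {f : V → ℝ} {m : ℝ} (hf : StrongConvexOn Set.univ m f) :
    ∀ᵐ x ∂μ, DifferentiableAt ℝ f x := by
  have hconvex := (strongConvexOn_iff_convex.1 hf).locallyLipschitz
  filter_upwards [ae_differentiableAt_of_locallyLipschitz μ hconvex] with x hx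
  have hsq : DifferentiableAt ℝ (fun z : V => m / 2 * ‖z‖ ^ 2) x :=
    (differentiableAt_id.norm_sq ℝ).const_mul _
  simpa using hx.fun_add hsq

end Rademacher

section Shift

variable {α F : Type*} [MeasurableSpace α] [NormedAddCommGroup F]
  {μ : Measure α} {T : α ≃ᵐ α} {E : Set α}

lemma integrableOn_comp_inter_preimage {w : α → F} (hT : MeasurePreserving T μ μ)
    (hw : IntegrableOn w E μ) : IntegrableOn (fun x => w (T x)) (E ∩ T ⁻¹' E) μ :=
  ((hT.integrableOn_comp_preimage T.measurableEmbedding).2 hw).mono_set Set.inter_subset_right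

lemma preimage_inter_preimage_symm : T ⁻¹' (E ∩ T.symm ⁻¹' E) = E ∩ T ⁻¹' E := by
  rw [Set.preimage_inter, ← Set.preimage_comp, T.symm_comp_self, Set.preimage_id, Set.inter_comm]

lemma measureReal_sdiff_preimage_symm (hT : MeasurePreserving T μ μ) (hE : MeasurableSet E)
    (hμE : μ E ≠ ⊤) : μ.real (E \ T.symm ⁻¹' E) = μ.real (E \ T ⁻¹' E) := by
  have hinter : μ.real (E ∩ T.symm ⁻¹' E) = μ.real (E ∩ T ⁻¹' E) := by
    rw [← hT.measureReal_preimage (hE.inter (T.symm.measurable hE)).nullMeasurableSet,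
      preimage_inter_preimage_symm]
  have h₁ := measureReal_inter_add_sdiff (s := E) (T.measurable hE) hμE
  have h₂ := measureReal_inter_add_sdiff (s := E) (T.symm.measurable hE) hμE
  linarith

lemma norm_setIntegral_comp_sub_le [NormedSpace ℝ F] {w : α → F} {K : ℝ}
    (hT : MeasurePreserving T μ μ) (hE : MeasurableSet E) (hμE : μ E ≠ ⊤)
    (hw : IntegrableOn w E μ) (hK : ∀ᵐ x ∂μ.restrict E, ‖w x‖ ≤ K) :
    ‖∫ x in E ∩ T ⁻¹' E, (w (T x) - w x) ∂μ‖ ≤ 2 * K * μ.real (E \ T ⁻¹' E) := by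
  have hchange : ∫ x in E ∩ T ⁻¹' E, w (T x) ∂μ = ∫ x in E ∩ T.symm ⁻¹' E, w x ∂μ := by
    rw [← preimage_inter_preimage_symm, hT.setIntegral_preimage_emb T.measurableEmbedding]
  have hsplit := integral_inter_add_sdiff (T.measurable hE) hw
  have hsplit' := integral_inter_add_sdiff (T.symm.measurable hE) hw
  have hbound (A : Set α) : ‖∫ x in E \ A, w x ∂μ‖ ≤ K * μ.real (E \ A) :=
    norm_setIntegral_le_of_norm_le_const_ae ((measure_mono Set.sdiff_subset).trans_lt hμE.lt_top)
      (ae_restrict_of_ae_restrict_of_subset Set.sdiff_subset hK)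
  calc ‖∫ x in E ∩ T ⁻¹' E, (w (T x) - w x) ∂μ‖
      = ‖(∫ x in E \ T ⁻¹' E, w x ∂μ) - ∫ x in E \ T.symm ⁻¹' E, w x ∂μ‖ := by
        rw [integral_sub (integrableOn_comp_inter_preimage hT hw)
          (hw.mono_set Set.inter_subset_left), hchange, eq_sub_of_add_eq hsplit,
          eq_sub_of_add_eq hsplit', sub_sub_sub_cancel_left]
    _ ≤ K * μ.real (E \ T ⁻¹' E) + K * μ.real (E \ T.symm ⁻¹' E) :=
        (norm_sub_le _ _).trans (add_le_add (hbound _) (hbound _))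
    _ = 2 * K * μ.real (E \ T ⁻¹' E) := by
        rw [measureReal_sdiff_preimage_symm hT hE hμE]
        ring

lemma setIntegral_abs_sub_le_of_shift_bound {u w : α → ℝ} {K c : ℝ}
    (hT : MeasurePreserving T μ μ) (hE : MeasurableSet E) (hμE : μ E ≠ ⊤)
    (hu : IntegrableOn u E μ) (hw : IntegrableOn w E μ)
    (huK : ∀ᵐ x ∂μ.restrict E, |u x| ≤ K) (hwK : ∀ᵐ x ∂μ.restrict E, |w x| ≤ K)
    (hshift : ∀ᵐ x ∂μ.restrict (E ∩ T ⁻¹' E),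
      |u x - w x| ≤ (u (T x) - u x) + (w (T x) - w x) + c) :
    ∫ x in E, |u x - w x| ∂μ ≤
      c * μ.real (E ∩ T ⁻¹' E) + 6 * K * μ.real (E \ T ⁻¹' E) := by
  have hu_sub : IntegrableOn (fun x => u (T x) - u x) (E ∩ T ⁻¹' E) μ :=
    (integrableOn_comp_inter_preimage hT hu).sub (hu.mono_set Set.inter_subset_left)
  have hw_sub : IntegrableOn (fun x => w (T x) - w x) (E ∩ T ⁻¹' E) μ :=
    (integrableOn_comp_inter_preimage hT hw).sub (hw.mono_set Set.inter_subset_left)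
  have habs : IntegrableOn (fun x => |u x - w x|) E μ := (hu.sub hw).abs
  have hconst : IntegrableOn (fun _ => c) (E ∩ T ⁻¹' E) μ :=
    integrableOn_const (measure_ne_top_of_subset Set.inter_subset_left hμE)
  have hgood : ∫ x in E ∩ T ⁻¹' E, |u x - w x| ∂μ ≤
      c * μ.real (E ∩ T ⁻¹' E) + 4 * K * μ.real (E \ T ⁻¹' E) := by
    have hmono := integral_mono_ae (habs.mono_set Set.inter_subset_left)
      ((hu_sub.add hw_sub).add hconst) hshift
    have hu_le := le_of_abs_le (norm_setIntegral_comp_sub_le hT hE hμE hu huK)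
    have hw_le := le_of_abs_le (norm_setIntegral_comp_sub_le hT hE hμE hw hwK)
    rw [integral_add' (hu_sub.add hw_sub) hconst, integral_add' hu_sub hw_sub, setIntegral_const,
      smul_eq_mul] at hmono
    linarith
  have hbad : ∫ x in E \ T ⁻¹' E, |u x - w x| ∂μ ≤ 2 * K * μ.real (E \ T ⁻¹' E) := by
    refine (Real.le_norm_self _).trans (norm_setIntegral_le_of_norm_le_const_ae
      ((measure_mono Set.sdiff_subset).trans_lt hμE.lt_top)
      (ae_restrict_of_ae_restrict_of_subset Set.sdiff_subset ?_))
    filter_upwards [huK, hwK] with x hux hwx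
    rw [Real.norm_eq_abs, abs_abs]
    linarith [abs_sub (u x) (w x)]
  have hsplit := integral_inter_add_sdiff (T.measurable hE) habs
  linarith

end Shift

section Sweep

open Module Topology
open scoped Pointwise

lemma inter_frontier_nonempty_of_isPreconnected {X : Type*} [TopologicalSpace X] {s t : Set X}
    (ht : IsPreconnected t) (hts : (t ∩ s).Nonempty) (hts' : (t \ s).Nonempty) :
    (t ∩ frontier s).Nonempty := by
  by_contra! hempty
  have hcover : t ⊆ interior s ∪ interior sᶜ := fun x hx => by
    by_contra hx'
    rw [← compl_frontier_eq_union_interior, Set.notMem_compl_iff] at hx'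
    exact hempty.subset ⟨hx, hx'⟩
  obtain ⟨x, hxt, hxs⟩ := hts
  obtain ⟨y, hyt, hys⟩ := hts'
  have hx : x ∈ interior s :=
    (hcover hxt).resolve_right fun h => interior_subset h hxs
  have hy : y ∈ interior sᶜ :=
    (hcover hyt).resolve_left fun h => hys (interior_subset h)
  obtain ⟨z, -, hz, hz'⟩ :=
    ht _ _ isOpen_interior isOpen_interior hcover ⟨x, hxt, hx⟩ ⟨y, hyt, hy⟩
  exact interior_subset hz' (interior_subset hz)

lemma sdiff_preimage_add_right_subset {V : Type*} [AddCommGroup V] [Module ℝ V]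
    [TopologicalSpace V] [IsTopologicalAddGroup V] [ContinuousSMul ℝ V] (E : Set V) (v : V) :
    E \ (· + v) ⁻¹' E ⊆ frontier E + segment ℝ 0 (-v) := by
  rintro x ⟨hx, hxv⟩
  obtain ⟨y, hy, hyE⟩ := inter_frontier_nonempty_of_isPreconnected
    (convex_segment x (x + v)).isPreconnected
    ⟨x, left_mem_segment ℝ x (x + v), hx⟩ ⟨x + v, right_mem_segment ℝ x (x + v), hxv⟩
  refine ⟨y, hyE, x - y, ?_, add_sub_cancel y x⟩
  rw [segment_eq_image'] at hy ⊢
  obtain ⟨t, ht, rfl⟩ := hy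
  exact ⟨t, ht, by simp⟩

/-- The outer measure `A ↦ μ (A + K)` of the region swept out when `A` is translated by the vectors
of `K`. As an outer measure, it can be compared with a Hausdorff measure by bounding it on sets of
small diameter only. -/
def sweepOuterMeasure {V : Type*} [Add V] [MeasurableSpace V] (μ : Measure V) (K : Set V) :
    OuterMeasure V where
  measureOf A := μ (A + K)
  empty := by rw [Set.empty_add, measure_empty]
  mono h := measure_mono (Set.add_subset_add_right h)
  iUnion_nat A _ := by
    rw [Set.iUnion_add]
    exact measure_iUnion_le _

lemma sweepOuterMeasure_apply {V : Type*} [Add V] [MeasurableSpace V] (μ : Measure V)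
    (K A : Set V) : sweepOuterMeasure μ K A = μ (A + K) := rfl

lemma ediam_segment {V : Type*} [SeminormedAddCommGroup V] [NormedSpace ℝ V] (x y : V) :
    ediam (segment ℝ x y) = edist x y := by
  rw [← convexHull_pair, convexHull_ediam, Metric.ediam_pair]

variable {V : Type*} [NormedAddCommGroup V] [InnerProductSpace ℝ V]

section OrthonormalBasis

variable {ι : Type*} [Fintype ι]

lemma ediam_repr_image_add_segment_le (b : OrthonormalBasis ι ℝ V) (j : ι) (S : Set V) (v : V) :
    ediam ((b.repr · j) '' (S + segment ℝ 0 v)) ≤ ediam S + ‖b.repr v j‖ₑ := by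
  let coord : V →ₗ[ℝ] ℝ := LinearMap.proj j ∘ₗ b.toBasis.equivFun.toLinearMap
  have hcoord : ⇑coord = (b.repr · j) := by ext x; simp [coord]
  have hlip : LipschitzWith 1 coord := by
    refine LipschitzWith.of_dist_le_mul fun x y => ?_
    rw [NNReal.coe_one, one_mul, dist_eq_norm, dist_eq_norm, ← map_sub, ← b.repr.norm_map, hcoord]
    exact PiLp.norm_apply_le _ j
  have himage : coord '' segment ℝ 0 v = segment ℝ 0 (coord v) := by
    simpa using image_segment ℝ coord.toAffineMap 0 v
  rw [← hcoord, Set.image_add coord]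
  refine (ediam_add_le _ _).trans (add_le_add ?_ ?_)
  · simpa using hlip.ediam_image_le S
  · rw [himage, ediam_segment, edist_zero_left, hcoord, enorm_eq_nnnorm]

variable [FiniteDimensional ℝ V] [MeasurableSpace V] [BorelSpace V]

lemma volume_le_prod_ediam_repr (b : OrthonormalBasis ι ℝ V) (S : Set V) :
    volume S ≤ ∏ j, ediam ((b.repr · j) '' S) := by
  let e : V ≃ᵐ (ι → ℝ) := b.measurableEquiv.trans (MeasurableEquiv.toLp 2 (ι → ℝ)).symm
  have he : MeasurePreserving e :=
    b.measurePreserving_measurableEquiv.trans (PiLp.volume_preserving_ofLp ι)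
  rw [← (he.symm e).measure_preimage_equiv S, ← e.image_eq_preimage_symm]
  refine (Real.volume_pi_le_prod_diam _).trans_eq (Finset.prod_congr rfl fun j _ => ?_)
  rw [Set.image_image]
  rfl

lemma volume_add_segment_smul_le (b : OrthonormalBasis ι ℝ V) (i : ι) (h : ℝ) (S : Set V) :
    volume (S + segment ℝ 0 (h • b i)) ≤ (ediam S + ‖h‖ₑ) * ediam S ^ (Fintype.card ι - 1) := by
  classical
  calc volume (S + segment ℝ 0 (h • b i))
      ≤ ∏ j, ediam ((b.repr · j) '' (S + segment ℝ 0 (h • b i))) := volume_le_prod_ediam_repr b _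
    _ ≤ ∏ j, (ediam S + ‖b.repr (h • b i) j‖ₑ) :=
        Finset.prod_le_prod' fun j _ => ediam_repr_image_add_segment_le b j S _
    _ = (ediam S + ‖h‖ₑ) * ediam S ^ (Fintype.card ι - 1) := by
        rw [← Finset.mul_prod_erase _ _ (Finset.mem_univ i)]
        congr 1
        · simp
        · rw [← Finset.card_univ, ← Finset.card_erase_of_mem (Finset.mem_univ i),
            ← Finset.prod_const]
          refine Finset.prod_congr rfl fun j hj => ?_
          simp [Finset.ne_of_mem_erase hj]

end OrthonormalBasis

variable [FiniteDimensional ℝ V] [MeasurableSpace V] [BorelSpace V]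

lemma volume_add_segment_le_ediam_pow {v : V} (hv : v ≠ 0) (S : Set V) :
    volume (S + segment ℝ 0 v) ≤ (ediam S + ‖v‖ₑ) * ediam S ^ (finrank ℝ V - 1) := by
  have : Nontrivial V := ⟨v, 0, hv⟩
  let i : Fin (finrank ℝ V) := ⟨0, finrank_pos⟩
  have hunit : ‖‖v‖⁻¹ • v‖ = 1 := norm_smul_inv_norm (𝕜 := ℝ) hv
  obtain ⟨b, hb⟩ := Orthonormal.exists_orthonormalBasis_extension_of_card_eq
    (v := fun _ : Fin (finrank ℝ V) => ‖v‖⁻¹ • v) (s := {i}) (Fintype.card_fin _).symm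
    (orthonormal_subsingleton_iff.2 fun _ => hunit)
  have hv_eq : v = ‖v‖ • b i := by
    rw [hb i rfl, smul_inv_smul₀ (norm_ne_zero_iff.2 hv)]
  have hbound := volume_add_segment_smul_le b i ‖v‖ S
  rwa [← hv_eq, enorm_norm, Fintype.card_fin] at hbound

lemma volume_add_segment_le_hausdorffMeasure {v : V} (hv : v ≠ 0) (A : Set V) :
    volume (A + segment ℝ 0 v) ≤ ‖v‖ₑ * μH[finrank ℝ V - 1] A := by
  have : Nontrivial V := ⟨v, 0, hv⟩
  have hexp : (finrank ℝ V - 1 : ℝ) = (finrank ℝ V - 1 : ℕ) := by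
    rw [Nat.cast_sub finrank_pos, Nat.cast_one]
  have hscale {r : ℝ≥0∞} (hr : r ∈ Set.Ioo 0 ⊤) :
      volume (A + segment ℝ 0 v) ≤ (r + ‖v‖ₑ) * μH[finrank ℝ V - 1] A := by
    have hle : sweepOuterMeasure volume (segment ℝ 0 v) ≤ OuterMeasure.mkMetric
        ((r + ‖v‖ₑ) • fun t : ℝ≥0∞ => t ^ (finrank ℝ V - 1 : ℝ)) := by
      refine OuterMeasure.le_mkMetric _ _ r hr.1 fun S hS => ?_
      rw [Pi.smul_apply, smul_eq_mul, hexp, ENNReal.rpow_natCast]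
      exact (volume_add_segment_le_ediam_pow hv S).trans (by gcongr)
    rw [OuterMeasure.mkMetric_smul _ (by finiteness [hr.2.ne]) (by simp [hv])] at hle
    have := hle A
    rwa [sweepOuterMeasure_apply, smul_apply, OuterMeasure.coe_mkMetric] at this
  have hlim : Tendsto (fun r => (r + ‖v‖ₑ) * μH[finrank ℝ V - 1] A) (𝓝[>] 0)
      (𝓝 ((0 + ‖v‖ₑ) * μH[finrank ℝ V - 1] A)) :=
    ENNReal.Tendsto.mul_const
      ((tendsto_nhdsWithin_of_tendsto_nhds tendsto_id).add tendsto_const_nhds) (.inl (by simp [hv]))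
  rw [zero_add] at hlim
  exact ge_of_tendsto hlim (mem_of_superset (Ioo_mem_nhdsGT ENNReal.zero_lt_top) fun r => hscale)

lemma volume_sdiff_preimage_add_right_le (E : Set V) (v : V) :
    volume (E \ (· + v) ⁻¹' E) ≤ ‖v‖ₑ * μH[finrank ℝ V - 1] (frontier E) := by
  rcases eq_or_ne v 0 with rfl | hv
  · simp
  · rw [← enorm_neg]
    exact (measure_mono (sdiff_preimage_add_right_subset E v)).trans
      (volume_add_segment_le_hausdorffMeasure (neg_ne_zero.2 hv) _)

end Sweep

lemma opNorm_le_sum_norm_apply {ι 𝕜 V F : Type*} [Fintype ι] [RCLike 𝕜] [NormedAddCommGroup V]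
    [InnerProductSpace 𝕜 V] [SeminormedAddCommGroup F] [NormedSpace 𝕜 F]
    (b : OrthonormalBasis ι 𝕜 V) (L : V →L[𝕜] F) : ‖L‖ ≤ ∑ i, ‖L (b i)‖ := by
  refine L.opNorm_le_bound (by positivity) fun x => ?_
  calc ‖L x‖ = ‖∑ i, b.repr x i • L (b i)‖ := by
        conv_lhs => rw [← b.sum_repr x, map_sum]
        simp only [map_smul]
    _ ≤ ∑ i, ‖L (b i)‖ * ‖x‖ := by
        refine norm_sum_le_of_le _ fun i _ => ?_
        rw [norm_smul, mul_comm, ← b.repr.norm_map x]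
        gcongr
        exact PiLp.norm_apply_le _ i
    _ = (∑ i, ‖L (b i)‖) * ‖x‖ := (Finset.sum_mul ..).symm

section GradientStability

open Module

variable {V : Type*} [NormedAddCommGroup V] [InnerProductSpace ℝ V] [FiniteDimensional ℝ V]
  [MeasurableSpace V] [BorelSpace V] {E : Set V} {f g : V → ℝ} {m η K : ℝ}

lemma integrableOn_fderiv_apply (hE : volume E ≠ ⊤)
    (hfK : ∀ᵐ x ∂volume.restrict E, ‖fderiv ℝ f x‖ ≤ K) (v : V) :
    IntegrableOn (fun x => fderiv ℝ f x v) E :=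
  Measure.integrableOn_of_bounded (M := K * ‖v‖) hE
    (measurable_fderiv_apply_const ℝ f v).aestronglyMeasurable
    (hfK.mono fun x hx => (fderiv ℝ f x).le_of_opNorm_le hx v)

lemma setIntegral_abs_fderiv_apply_sub_le (hE : MeasurableSet E) (hE_fin : volume E ≠ ⊤)
    (hE_frontier : μH[finrank ℝ V - 1] (frontier E) ≠ ⊤)
    (hf : StrongConvexOn Set.univ m f) (hg : StrongConvexOn Set.univ m g)
    (hη : 0 ≤ η) (hfg : ∀ x ∈ E, |f x - g x| ≤ η) (hK : 0 ≤ K)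
    (hfK : ∀ᵐ x ∂volume.restrict E, ‖fderiv ℝ f x‖ ≤ K)
    (hgK : ∀ᵐ x ∂volume.restrict E, ‖fderiv ℝ g x‖ ≤ K) (v : V) :
    ∫ x in E, |fderiv ℝ f x v - fderiv ℝ g x v| ≤
      2 * (η + |m| * ‖v‖ ^ 2) * volume.real E +
        6 * K * ‖v‖ ^ 2 * (μH[finrank ℝ V - 1]).real (frontier E) := by
  let T : V ≃ᵐ V := MeasurableEquiv.addRight v
  have hT : MeasurePreserving T volume volume := measurePreserving_add_right volume v
  have hT_ae {p : V → Prop} (hp : ∀ᵐ x, p x) : ∀ᵐ x, p (x + v) := hT.quasiMeasurePreserving.ae hp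
  have hf_diff := ae_differentiableAt_of_strongConvexOn volume hf
  have hg_diff := ae_differentiableAt_of_strongConvexOn volume hg
  have hshift : ∀ᵐ x ∂volume.restrict (E ∩ T ⁻¹' E), |fderiv ℝ f x v - fderiv ℝ g x v| ≤
      (fderiv ℝ f (T x) v - fderiv ℝ f x v) + (fderiv ℝ g (T x) v - fderiv ℝ g x v) +
        (2 * η - 2 * m * ‖v‖ ^ 2) := by
    rw [ae_restrict_iff' (hE.inter (T.measurable hE))]
    filter_upwards [hf_diff, hT_ae hf_diff, hg_diff, hT_ae hg_diff] with x hfx hfxv hgx hgxv hx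
    exact abs_fderiv_sub_le_of_strongConvexOn hf hg (Set.mem_univ _) (Set.mem_univ _)
      hfx hfxv hgx hgxv (hfg x hx.1) (hfg (x + v) hx.2)
  have hsweep : volume.real (E \ T ⁻¹' E) ≤ ‖v‖ * (μH[finrank ℝ V - 1]).real (frontier E) := by
    rw [measureReal_def, measureReal_def, ← toReal_enorm v, ← ENNReal.toReal_mul]
    exact ENNReal.toReal_mono (by finiteness) (volume_sdiff_preimage_add_right_le E v)
  calc ∫ x in E, |fderiv ℝ f x v - fderiv ℝ g x v|
      ≤ (2 * η - 2 * m * ‖v‖ ^ 2) * volume.real (E ∩ T ⁻¹' E) +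
          6 * (K * ‖v‖) * volume.real (E \ T ⁻¹' E) :=
        setIntegral_abs_sub_le_of_shift_bound hT hE hE_fin
          (integrableOn_fderiv_apply hE_fin hfK v) (integrableOn_fderiv_apply hE_fin hgK v)
          (hfK.mono fun x hx => (fderiv ℝ f x).le_of_opNorm_le hx v)
          (hgK.mono fun x hx => (fderiv ℝ g x).le_of_opNorm_le hx v) hshift
    _ ≤ 2 * (η + |m| * ‖v‖ ^ 2) * volume.real E +
          6 * (K * ‖v‖) * (‖v‖ * (μH[finrank ℝ V - 1]).real (frontier E)) := by
        gcongr ?_ * ?_ + _ * ?_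
        · nlinarith [neg_le_abs m, sq_nonneg ‖v‖]
        · exact measureReal_mono Set.inter_subset_left hE_fin
    _ = _ := by ring

lemma setIntegral_abs_fderiv_apply_sub_le_sqrt (hE : MeasurableSet E) (hE_fin : volume E ≠ ⊤)
    (hE_frontier : μH[finrank ℝ V - 1] (frontier E) ≠ ⊤)
    (hf : StrongConvexOn Set.univ m f) (hg : StrongConvexOn Set.univ m g)
    (hη : 0 ≤ η) (hfg : ∀ x ∈ E, |f x - g x| ≤ η) (hK : 0 ≤ K)
    (hfK : ∀ᵐ x ∂volume.restrict E, ‖fderiv ℝ f x‖ ≤ K)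
    (hgK : ∀ᵐ x ∂volume.restrict E, ‖fderiv ℝ g x‖ ≤ K) {e : V} (he : ‖e‖ = 1) :
    ∫ x in E, |fderiv ℝ f x e - fderiv ℝ g x e| ≤
      (2 * (1 + |m|) * volume.real E +
        6 * K * (μH[finrank ℝ V - 1]).real (frontier E)) * √η := by
  have hpos {τ : ℝ} (hτ : 0 < τ) (hητ : η ≤ τ) : ∫ x in E, |fderiv ℝ f x e - fderiv ℝ g x e| ≤
      (2 * (1 + |m|) * volume.real E +
        6 * K * (μH[finrank ℝ V - 1]).real (frontier E)) * √τ := by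
    have hscale : ∫ x in E, |fderiv ℝ f x (√τ • e) - fderiv ℝ g x (√τ • e)| =
        √τ * ∫ x in E, |fderiv ℝ f x e - fderiv ℝ g x e| := by
      simp_rw [map_smul, smul_eq_mul, ← mul_sub, abs_mul, abs_of_nonneg (Real.sqrt_nonneg τ),
        integral_const_mul]
    have hnorm : ‖√τ • e‖ ^ 2 = τ := by
      rw [norm_smul, he, mul_one, Real.norm_eq_abs, sq_abs, Real.sq_sqrt hτ.le]
    have hbound := setIntegral_abs_fderiv_apply_sub_le hE hE_fin hE_frontier hf hg hτ.le
      (fun x hx => (hfg x hx).trans hητ) hK hfK hgK (√τ • e)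
    rw [hscale, hnorm] at hbound
    refine le_of_mul_le_mul_left (hbound.trans_eq ?_) (Real.sqrt_pos.2 hτ)
    rw [mul_left_comm, Real.mul_self_sqrt hτ.le]
    ring
  have hcont : Continuous fun τ : ℝ => (2 * (1 + |m|) * volume.real E +
      6 * K * (μH[finrank ℝ V - 1]).real (frontier E)) * √τ := by fun_prop
  refine ge_of_tendsto (hcont.continuousWithinAt (s := Set.Ioi η)) ?_
  filter_upwards [self_mem_nhdsWithin] with τ (hτ : η < τ)
  exact hpos (hη.trans_lt hτ) hτ.le

lemma setIntegral_norm_fderiv_sub_le (hE : MeasurableSet E) (hE_fin : volume E ≠ ⊤)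
    (hE_frontier : μH[finrank ℝ V - 1] (frontier E) ≠ ⊤)
    (hf : StrongConvexOn Set.univ m f) (hg : StrongConvexOn Set.univ m g)
    (hη : 0 ≤ η) (hfg : ∀ x ∈ E, |f x - g x| ≤ η) (hK : 0 ≤ K)
    (hfK : ∀ᵐ x ∂volume.restrict E, ‖fderiv ℝ f x‖ ≤ K)
    (hgK : ∀ᵐ x ∂volume.restrict E, ‖fderiv ℝ g x‖ ≤ K) :
    ∫ x in E, ‖fderiv ℝ f x - fderiv ℝ g x‖ ≤
      finrank ℝ V * (2 * (1 + |m|) * volume.real E +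
        6 * K * (μH[finrank ℝ V - 1]).real (frontier E)) * √η := by
  let b := stdOrthonormalBasis ℝ V
  have hint (i) : IntegrableOn (fun x => |fderiv ℝ f x (b i) - fderiv ℝ g x (b i)|) E :=
    ((integrableOn_fderiv_apply hE_fin hfK _).sub (integrableOn_fderiv_apply hE_fin hgK _)).abs
  calc ∫ x in E, ‖fderiv ℝ f x - fderiv ℝ g x‖
      ≤ ∫ x in E, ∑ i, |fderiv ℝ f x (b i) - fderiv ℝ g x (b i)| :=
        integral_mono_of_nonneg (ae_of_all _ fun x => norm_nonneg _)
          (integrable_finsetSum _ fun i _ => hint i)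
          (ae_of_all _ fun x => opNorm_le_sum_norm_apply b (fderiv ℝ f x - fderiv ℝ g x))
    _ = ∑ i, ∫ x in E, |fderiv ℝ f x (b i) - fderiv ℝ g x (b i)| :=
        integral_finsetSum _ fun i _ => hint i
    _ ≤ ∑ _i, _ := Finset.sum_le_sum fun i _ =>
        setIntegral_abs_fderiv_apply_sub_le_sqrt hE hE_fin hE_frontier hf hg hη hfg hK hfK hgK
          (b.norm_eq_one i)
    _ = _ := by
        rw [Finset.sum_const, Finset.card_univ, Fintype.card_fin, nsmul_eq_mul,
          mul_assoc (finrank ℝ V : ℝ)]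

end GradientStability

section DistanceLike

variable {d : ℕ} {δ δ' : Euc d → ℝ} {E : Set (Euc d)} {R ε : ℝ}

lemma strongConvexOn_neg_sq {V : Type*} [NormedAddCommGroup V] [InnerProductSpace ℝ V] {s : Set V}
    {δ : V → ℝ} (hδ : ConvexOn ℝ s fun x => ‖x‖ ^ 2 - δ x ^ 2) :
    StrongConvexOn s (-2) fun x => -δ x ^ 2 := by
  rw [strongConvexOn_iff_convex]
  convert hδ using 2
  ring

lemma norm_nvec_sub_nvec (δ δ' : Euc d → ℝ) (x : Euc d) :
    ‖nvec δ' x - nvec δ x‖ =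
      1 / 2 * ‖fderiv ℝ (fun y => -δ y ^ 2) x - fderiv ℝ (fun y => -δ' y ^ 2) x‖ := by
  rw [nvec, nvec, ← smul_sub, norm_smul, gradient, gradient, ← map_sub,
    LinearIsometryEquiv.norm_map, fderiv_fun_neg, fderiv_fun_neg, neg_sub_neg]
  norm_num

lemma ae_norm_fderiv_neg_sq_le (hδ : ConvexOn ℝ Set.univ fun x : Euc d => ‖x‖ ^ 2 - δ x ^ 2)
    (hE : MeasurableSet E) (hδR : ∀ x ∈ E, |δ x| ≤ R) :
    ∀ᵐ x ∂volume.restrict E, ‖fderiv ℝ (fun y => -δ y ^ 2) x‖ ≤ 2 * R := by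
  have hconvex := strongConvexOn_neg_sq hδ
  rw [ae_restrict_iff' hE]
  filter_upwards [ae_differentiableAt_of_strongConvexOn volume hconvex] with x hx hxE
  have hR : 0 ≤ R := (abs_nonneg _).trans (hδR x hxE)
  have hsq : ‖fderiv ℝ (fun y => -δ y ^ 2) x‖ ^ 2 ≤ 2 * 2 * (0 - -δ x ^ 2) :=
    norm_fderiv_sq_le_of_strongConvexOn_neg two_pos hconvex (fun y => neg_nonpos.2 (sq_nonneg _)) hx
  refine le_of_sq_le_sq ?_ (by positivity)
  linarith [sq_le_sq' (neg_le_of_abs_le (hδR x hxE)) (le_of_abs_le (hδR x hxE))]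

lemma abs_neg_sq_sub_neg_sq_le {a b : ℝ} (hab : |a - b| ≤ ε) (ha : |a| ≤ R) (hb : |b| ≤ R) :
    |-a ^ 2 - -b ^ 2| ≤ 2 * R * ε := by
  calc |-a ^ 2 - -b ^ 2| = |a + b| * |a - b| := by
        rw [← abs_mul, ← abs_neg]
        congr 1
        ring
    _ ≤ 2 * R * ε :=
        mul_le_mul (by linarith [abs_add_le a b]) hab (abs_nonneg _) (by linarith [abs_nonneg a])

lemma setIntegral_norm_nvec_sub_le (hE : MeasurableSet E) (hE_fin : volume E ≠ ⊤)
    (hE_frontier : μH[(d - 1 : ℝ)] (frontier E) ≠ ⊤)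
    (hδ : ConvexOn ℝ Set.univ fun x : Euc d => ‖x‖ ^ 2 - δ x ^ 2)
    (hδ' : ConvexOn ℝ Set.univ fun x : Euc d => ‖x‖ ^ 2 - δ' x ^ 2)
    (hε : ∀ x ∈ E, |δ x - δ' x| ≤ ε) (hδR : ∀ x ∈ E, |δ x| ≤ R) (hδR' : ∀ x ∈ E, |δ' x| ≤ R) :
    ∫ x in E, ‖nvec δ' x - nvec δ x‖ ≤
      d * (3 * volume.real E + 6 * R * (μH[(d - 1 : ℝ)]).real (frontier E)) * √(2 * R * ε) := by
  rcases E.eq_empty_or_nonempty with rfl | ⟨x₀, hx₀⟩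
  · simp
  have hε₀ : 0 ≤ ε := (abs_nonneg _).trans (hε x₀ hx₀)
  have hR : 0 ≤ R := (abs_nonneg _).trans (hδR x₀ hx₀)
  have hstab := setIntegral_norm_fderiv_sub_le hE hE_fin (by simpa using hE_frontier)
    (strongConvexOn_neg_sq hδ) (strongConvexOn_neg_sq hδ') (η := 2 * R * ε) (by positivity)
    (fun x hx => abs_neg_sq_sub_neg_sq_le (hε x hx) (hδR x hx) (hδR' x hx)) (K := 2 * R)
    (by positivity) (ae_norm_fderiv_neg_sq_le hδ hE hδR) (ae_norm_fderiv_neg_sq_le hδ' hE hδR')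
  rw [finrank_euclideanSpace_fin, abs_neg, Nat.abs_ofNat] at hstab
  simp only [norm_nvec_sub_nvec, integral_const_mul]
  linarith

end DistanceLike

theorem stmt4_general (d : ℕ) :
    ∃ C > 0, ∀ E : Set (Euc d), MeasurableSet E → μH[(d : ℝ)] E ≠ ⊤ →
      μH[(d - 1 : ℝ)] (frontier E) ≠ ⊤ →
      ∀ ε : ℝ, ∀ δ δ' : Euc d → ℝ,
      ConvexOn ℝ Set.univ (fun x : Euc d => ‖x‖ ^ 2 - δ x ^ 2) →
      ConvexOn ℝ Set.univ (fun x : Euc d => ‖x‖ ^ 2 - δ' x ^ 2) →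
      (∀ x ∈ E, |δ x - δ' x| ≤ ε) →
      ∀ R : ℝ, (∀ x ∈ E, |δ x| ≤ R) → (∀ x ∈ E, |δ' x| ≤ R) →
      (∫ x in E, ‖nvec δ' x - nvec δ x‖) ≤
        C * ((μH[(d : ℝ)] E).toReal + R * (μH[(d - 1 : ℝ)] (frontier E)).toReal) *
          √(2 * R * ε) := by
  set c : ℝ≥0 := Measure.addHaarScalarFactor (volume : Measure (Euc d)) μH[d]
  refine ⟨(d + 1) * (3 * c + 6), by positivity, ?_⟩
  intro E hE hE_fin hE_frontier ε δ δ' hδ hδ' hε R hδR hδR'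
  rcases E.eq_empty_or_nonempty with rfl | ⟨x₀, hx₀⟩
  · simp
  have hR : 0 ≤ R := (abs_nonneg _).trans (hδR x₀ hx₀)
  have hvol : volume E = c * μH[d] E :=
    DFunLike.congr_fun (Measure.isAddLeftInvariant_eq_smul _ _) E
  refine (setIntegral_norm_nvec_sub_le hE (by rw [hvol]; finiteness) hE_frontier hδ hδ' hε
    hδR hδR').trans ?_
  have hV : 0 ≤ (μH[(d : ℝ)] E).toReal := ENNReal.toReal_nonneg
  have hF : 0 ≤ (μH[(d - 1 : ℝ)] (frontier E)).toReal := ENNReal.toReal_nonneg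
  rw [measureReal_def, measureReal_def, hvol, ENNReal.toReal_mul, ENNReal.coe_toReal,
    mul_assoc _ (3 * (c : ℝ) + 6)]
  gcongr ?_ * ?_ * _
  · linarith
  · linarith [mul_nonneg c.coe_nonneg (mul_nonneg hR hF), hV]

/-- `L¹` stability of gradients of distance-like functions: for a bounded open set `E`
with rectifiable boundary, if `δ, δ'` are distance-like with `sup_E |δ - δ'| ≤ ε` and
`R` bounds both `δ` and `δ'` on `E`, then
`∫_E ‖n_{δ'} - n_δ‖ ≤ C₃ [H^d(E) + (2 diam E + 4R + √(2Rε)) H^{d-1}(∂E)] √(2Rε)`. -/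
theorem stmt4 (d : ℕ) :
    ∃ C₃ > 0, ∀ E : Set (Euc d), IsOpen E → Bornology.IsBounded E →
      RectifiableCodimOne d (frontier E) →
      ∀ ε : ℝ, 0 < ε →
      ∀ δ δ' : Euc d → ℝ, DistanceLike δ → DistanceLike δ' →
      (∀ x ∈ E, |δ x - δ' x| ≤ ε) →
      ∀ R : ℝ, (∀ x ∈ E, δ x ≤ R) → (∀ x ∈ E, δ' x ≤ R) →
      (∫ x in E, ‖nvec δ' x - nvec δ x‖) ≤
        C₃ * ((μH[(d : ℝ)] E).toReal +
            (2 * Metric.diam E + 4 * R + Real.sqrt (2 * R * ε)) *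
              (μH[(d - 1 : ℝ)] (frontier E)).toReal) *
          Real.sqrt (2 * R * ε) := by
  obtain ⟨C, hC, hbound⟩ := stmt4_general d
  refine ⟨C, hC, fun E hE hE_bdd hE_rect ε _ δ δ' hδ hδ' hε R hδR hδR' => ?_⟩
  rcases E.eq_empty_or_nonempty with rfl | ⟨x₀, hx₀⟩
  · simp
  have hR : 0 ≤ R := (hδ.1 x₀).trans (hδR x₀ hx₀)
  refine (hbound E hE.measurableSet hE_bdd.measure_lt_top.ne hE_rect.1.ne ε δ δ' hδ.2.2 hδ'.2.2 hε
    R (fun x hx => (abs_of_nonneg (hδ.1 x)).trans_le (hδR x hx))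
    fun x hx => (abs_of_nonneg (hδ'.1 x)).trans_le (hδR' x hx)).trans ?_
  gcongr
  linarith [diam_nonneg (s := E), Real.sqrt_nonneg (2 * R * ε)]
end
end

section
/- Let E ⊂ ℝ^d be bounded, and let δ, δ' be distance-like functions. Set R := max(sup_{x∈E} δ(x), sup_{x∈E} δ'(x)), ψ_δ(x) := ‖x‖² − δ(x)² and ψ_{δ'}(x) := ‖x‖² − δ'(x)². Then diam(∇ψ_δ(E) ∪ ∇ψ_{δ'}(E)) ≤ 2 diam(E) + 4R, where ∇ψ_δ(E) denotes the set of gradients of ψ_δ at the points of E where ψ_δ is differentiable (and similarly for ψ_{δ'}). -/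
open MeasureTheory Metric Filter
open scoped NNReal ENNReal

noncomputable section

/-- `∇f(E)`: the set of gradients of `f` at the points of `E` where `f` is
differentiable. -/
def gradSet {d : ℕ} (f : Euc d → ℝ) (E : Set (Euc d)) : Set (Euc d) :=
  {g | ∃ x ∈ E, DifferentiableAt ℝ f x ∧ gradient f x = g}

/-!
Since `ψ_δ ≤ ‖·‖ ^ 2`, a subgradient `g` of `ψ_δ` at `x` satisfies
`ψ_δ x + ⟪g, y - x⟫ ≤ ‖y‖ ^ 2` for every `y`. The choice `y = g / 2` turns this into
`‖g - 2 x‖ ≤ 2 δ x`, so the gradients over `E` of both functions lie within distance `2 R` of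
the dilate `2 E`, whose diameter is `2 diam E`.
-/

open scoped Gradient RealInnerProductSpace Pointwise

section FDeriv

variable {V : Type*} [NormedAddCommGroup V] [NormedSpace ℝ V]

lemma apply_sub_le_of_convexOn_of_hasFDerivWithinAt {s : Set V} {f : V → ℝ} {f' : V →L[ℝ] ℝ}
    {x y : V} (hf : ConvexOn ℝ s f) (hf' : HasFDerivWithinAt f f' s x) (hx : x ∈ s) (hy : y ∈ s) :
    f' (y - x) ≤ f y - f x := by
  set l : ℝ →ᵃ[ℝ] V := AffineMap.lineMap x y
  have hl₀ : l 0 = x := AffineMap.lineMap_apply_zero x y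
  have hl₁ : l 1 = y := AffineMap.lineMap_apply_one x y
  have hderiv : HasDerivWithinAt (f ∘ l) (f' (y - x)) (l ⁻¹' s) 0 :=
    hf'.comp_hasDerivWithinAt_of_eq 0 AffineMap.hasDerivWithinAt_lineMap
      (Set.mapsTo_preimage l s) hl₀.symm
  have hslope : f' (y - x) ≤ slope (f ∘ l) 0 1 :=
    (hf.comp_affineMap l).le_slope_of_hasDerivWithinAt (by simpa only [Set.mem_preimage, hl₀])
      (by simpa only [Set.mem_preimage, hl₁]) one_pos hderiv
  simpa [slope_def_field, hl₀, hl₁] using hslope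

end FDeriv

section Subgradient

variable {F : Type*} [NormedAddCommGroup F] [InnerProductSpace ℝ F] {f : F → ℝ}

lemma sq_norm_subgradient_sub_two_smul_le {g x : F} (hle : ∀ y, f y ≤ ‖y‖ ^ 2)
    (hg : ∀ y, f x + ⟪g, y - x⟫ ≤ f y) :
    ‖g - (2 : ℝ) • x‖ ^ 2 ≤ 4 * (‖x‖ ^ 2 - f x) := by
  -- Among all `y`, the point `g / 2` maximizes `⟪g, y⟫ - ‖y‖ ^ 2`, so it gives the best bound.
  have hhalf : f x + ⟪g, (1 / 2 : ℝ) • g - x⟫ ≤ ‖(1 / 2 : ℝ) • g‖ ^ 2 := (hg _).trans (hle _)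
  have hinner : ⟪g, (1 / 2 : ℝ) • g - x⟫ = ‖g‖ ^ 2 / 2 - ⟪g, x⟫ := by
    rw [inner_sub_right, real_inner_smul_right, real_inner_self_eq_norm_sq]
    ring
  have hnorm : ‖(1 / 2 : ℝ) • g‖ ^ 2 = ‖g‖ ^ 2 / 4 := by
    rw [norm_smul, Real.norm_of_nonneg one_half_pos.le]
    ring
  calc ‖g - (2 : ℝ) • x‖ ^ 2 = ‖g‖ ^ 2 - 4 * ⟪g, x⟫ + 4 * ‖x‖ ^ 2 := by
        rw [norm_sub_sq_real, real_inner_smul_right, norm_smul, Real.norm_two]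
        ring
    _ ≤ 4 * (‖x‖ ^ 2 - f x) := by linarith

variable [CompleteSpace F]

lemma image_gradient_subset_cthickening {E : Set F} {R : ℝ} (hf : ConvexOn ℝ Set.univ f)
    (hle : ∀ y, f y ≤ ‖y‖ ^ 2) (hR0 : 0 ≤ R) (hR : ∀ x ∈ E, ‖x‖ ^ 2 - f x ≤ R ^ 2) :
    ∇ f '' {x ∈ E | DifferentiableAt ℝ f x} ⊆ cthickening (2 * R) ((2 : ℝ) • E) := by
  rintro _ ⟨x, ⟨hx, hdiff⟩, rfl⟩
  have hsub (y : F) : f x + ⟪∇ f x, y - x⟫ ≤ f y := by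
    rw [← le_sub_iff_add_le', inner_gradient_left]
    exact apply_sub_le_of_convexOn_of_hasFDerivWithinAt hf hdiff.hasFDerivAt.hasFDerivWithinAt
      (Set.mem_univ x) (Set.mem_univ y)
  refine mem_cthickening_of_dist_le _ _ _ _ (Set.smul_mem_smul_set hx) ?_
  rw [dist_eq_norm]
  refine le_of_sq_le_sq ?_ (by positivity)
  calc ‖∇ f x - (2 : ℝ) • x‖ ^ 2 ≤ 4 * (‖x‖ ^ 2 - f x) :=
        sq_norm_subgradient_sub_two_smul_le hle hsub
    _ ≤ 4 * R ^ 2 := by gcongr; exact hR x hx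
    _ = (2 * R) ^ 2 := by ring

theorem stmt6_general {E : Set F} (hE : Bornology.IsBounded E) {δ δ' : F → ℝ}
    (hδ : ConvexOn ℝ Set.univ fun x ↦ ‖x‖ ^ 2 - δ x ^ 2)
    (hδ' : ConvexOn ℝ Set.univ fun x ↦ ‖x‖ ^ 2 - δ' x ^ 2) {R : ℝ} (hR0 : 0 ≤ R)
    (hRδ : ∀ x ∈ E, |δ x| ≤ R) (hRδ' : ∀ x ∈ E, |δ' x| ≤ R) :
    diam (∇ (fun x ↦ ‖x‖ ^ 2 - δ x ^ 2) ''
          {x ∈ E | DifferentiableAt ℝ (fun x ↦ ‖x‖ ^ 2 - δ x ^ 2) x} ∪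
        ∇ (fun x ↦ ‖x‖ ^ 2 - δ' x ^ 2) ''
          {x ∈ E | DifferentiableAt ℝ (fun x ↦ ‖x‖ ^ 2 - δ' x ^ 2) x}) ≤
      2 * diam E + 4 * R := by
  have hsubset {η : F → ℝ} (hη : ConvexOn ℝ Set.univ fun x ↦ ‖x‖ ^ 2 - η x ^ 2)
      (hRη : ∀ x ∈ E, |η x| ≤ R) :
      ∇ (fun x ↦ ‖x‖ ^ 2 - η x ^ 2) ''
          {x ∈ E | DifferentiableAt ℝ (fun x ↦ ‖x‖ ^ 2 - η x ^ 2) x} ⊆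
        cthickening (2 * R) ((2 : ℝ) • E) :=
    image_gradient_subset_cthickening hη (fun y ↦ sub_le_self _ (sq_nonneg (η y))) hR0
      fun x hx ↦ by simpa only [sub_sub_cancel] using sq_le_sq.2 ((hRη x hx).trans (le_abs_self R))
  calc diam _ ≤ diam (cthickening (2 * R) ((2 : ℝ) • E)) :=
        diam_mono (Set.union_subset (hsubset hδ hRδ) (hsubset hδ' hRδ'))
          (hE.smul₀ (2 : ℝ)).cthickening
    _ ≤ diam ((2 : ℝ) • E) + 2 * (2 * R) := diam_cthickening_le _ (by positivity)
    _ = 2 * diam E + 4 * R := by rw [diam_smul₀, Real.norm_two]; ring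

end Subgradient

lemma gradSet_eq_image {d : ℕ} (f : Euc d → ℝ) (E : Set (Euc d)) :
    gradSet f E = ∇ f '' {x ∈ E | DifferentiableAt ℝ f x} := by
  ext g
  simp [gradSet, and_assoc]

/-- If `E` is bounded, `δ, δ'` are distance-like and `R ≥ 0` bounds both `δ` and `δ'`
on `E`, then `diam(∇ψ_δ(E) ∪ ∇ψ_{δ'}(E)) ≤ 2 diam(E) + 4R`,
where `ψ_δ(x) = ‖x‖² - δ(x)²`. -/
theorem stmt6 {d : ℕ} (E : Set (Euc d)) (hE : Bornology.IsBounded E)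
    (δ δ' : Euc d → ℝ) (hδ : DistanceLike δ) (hδ' : DistanceLike δ')
    (R : ℝ) (hR0 : 0 ≤ R) (hRδ : ∀ x ∈ E, δ x ≤ R) (hRδ' : ∀ x ∈ E, δ' x ≤ R) :
    Metric.diam (gradSet (fun x : Euc d => ‖x‖ ^ 2 - δ x ^ 2) E ∪
        gradSet (fun x : Euc d => ‖x‖ ^ 2 - δ' x ^ 2) E) ≤
      2 * Metric.diam E + 4 * R := by
  simpa only [gradSet_eq_image] using stmt6_general hE hδ.2.2 hδ'.2.2 hR0
    (fun x hx ↦ (abs_of_nonneg (hδ.1 x)).trans_le (hRδ x hx))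
    (fun x hx ↦ (abs_of_nonneg (hδ'.1 x)).trans_le (hRδ' x hx))
end
end

section
/- Every distance-like function is 1-Lipschitz: if δ : ℝ^d → [0,∞) is such that x ↦ ‖x‖² − δ(x)² is convex, then for all x, y ∈ ℝ^d, |δ(x) − δ(y)| ≤ ‖x − y‖. -/
open MeasureTheory Metric Filter

noncomputable section

/-! In an inner product space, convexity of `‖x‖² - δ(x)²` says that `f = δ²` is strongly concave
with the negative constant `-2`, that is, `a f(y) + b f(p) ≤ f(a y + b p) + a b ‖y - p‖²` for all
weights `a + b = 1`. Given `x` and `y`, choose `p` on the line through them so that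
`x = a y + b p`. Dropping `b f(p) ≥ 0` leaves `f(y) ≤ f(x) / a + ‖x - y‖² / b`, and minimizing the
right-hand side over the weights gives `f(y) ≤ (√f(x) + ‖x - y‖)²`. -/

theorem le_add_sq_of_forall_le_sq_div_add_sq_div {c s t : ℝ} (hs : 0 < s) (ht : 0 < t)
    (h : ∀ a b : ℝ, 0 < a → 0 < b → a + b = 1 → c ≤ s ^ 2 / a + t ^ 2 / b) :
    c ≤ (s + t) ^ 2 := calc
  c ≤ s ^ 2 / (s / (s + t)) + t ^ 2 / (t / (s + t)) :=
    h _ _ (by positivity) (by positivity) (by field_simp)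
  _ = (s + t) ^ 2 := by field_simp

theorem sqrt_le_add_of_forall_le_sq_div_add_sq_div {c s t : ℝ} (hs : 0 ≤ s) (ht : 0 ≤ t)
    (h : ∀ a b : ℝ, 0 < a → 0 < b → a + b = 1 → c ≤ s ^ 2 / a + t ^ 2 / b) :
    √c ≤ s + t := by
  -- The optimal weights `s / (s + t)` and `t / (s + t)` may vanish, so perturb `s` and `t`.
  refine le_of_forall_pos_le_add fun ε hε ↦ ?_
  have hc : c ≤ (s + ε / 2 + (t + ε / 2)) ^ 2 := by
    refine le_add_sq_of_forall_le_sq_div_add_sq_div (by positivity) (by positivity)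
      fun a b ha hb hab ↦ (h a b ha hb hab).trans ?_
    gcongr <;> linarith
  calc √c ≤ s + ε / 2 + (t + ε / 2) := Real.sqrt_le_iff.2 ⟨by positivity, hc⟩
    _ = s + t + ε := by ring

section NormedSpace

variable {E : Type*} [NormedAddCommGroup E] [NormedSpace ℝ E] {f : E → ℝ}

theorem le_div_add_mul_sq_div_of_strongConcaveOn {m : ℝ} (hf : ∀ x, 0 ≤ f x)
    (hconc : StrongConcaveOn Set.univ (-m) f) (x y : E) {a b : ℝ}
    (ha : 0 < a) (hb : 0 < b) (hab : a + b = 1) :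
    f y ≤ f x / a + m / 2 * dist x y ^ 2 / b := by
  set p : E := y + b⁻¹ • (x - y) with hp
  have hx : a • y + b • p = x := by
    rw [hp, smul_add, smul_inv_smul₀ hb.ne', ← add_assoc, ← add_smul, hab, one_smul,
      add_sub_cancel]
  have hdist : ‖y - p‖ = dist x y / b := by
    rw [hp, sub_add_cancel_left, norm_neg, norm_smul, norm_inv, Real.norm_of_nonneg hb.le,
      dist_eq_norm, inv_mul_eq_div]
  have hconc_x := hconc.2 (Set.mem_univ y) (Set.mem_univ p) ha.le hb.le hab
  rw [hx, hdist, smul_eq_mul, smul_eq_mul] at hconc_x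
  have hp_nonneg : 0 ≤ b * f p := mul_nonneg hb.le (hf p)
  have hmul : a * f y ≤ f x + a * (m / 2 * dist x y ^ 2 / b) := by
    have : a * b * (-m / 2 * (dist x y / b) ^ 2) =
        -(a * (m / 2 * dist x y ^ 2 / b)) := by field_simp
    linarith
  calc f y ≤ (f x + a * (m / 2 * dist x y ^ 2 / b)) / a := (le_div_iff₀' ha).2 hmul
    _ = f x / a + m / 2 * dist x y ^ 2 / b := by rw [add_div, mul_div_cancel_left₀ _ ha.ne']

theorem lipschitzWith_sqrt_of_strongConcaveOn {K : NNReal} (hf : ∀ x, 0 ≤ f x)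
    (hconc : StrongConcaveOn Set.univ (-(2 * (K : ℝ) ^ 2)) f) :
    LipschitzWith K fun x ↦ √(f x) := by
  refine LipschitzWith.of_le_add_mul K fun y x ↦
    sqrt_le_add_of_forall_le_sq_div_add_sq_div (Real.sqrt_nonneg _) (by positivity)
      fun a b ha hb hab ↦ ?_
  rw [Real.sq_sqrt (hf x), dist_comm]
  simpa only [mul_div_cancel_left₀ _ (two_ne_zero' ℝ), ← mul_pow] using
    le_div_add_mul_sq_div_of_strongConcaveOn hf hconc x y ha hb hab

end NormedSpace

section InnerProductSpace

variable {E : Type*} [NormedAddCommGroup E] [InnerProductSpace ℝ E]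

theorem strongConcaveOn_neg_iff_convexOn {s : Set E} {f : E → ℝ} {m : ℝ} :
    StrongConcaveOn s (-m) f ↔ ConvexOn ℝ s fun x ↦ m / 2 * ‖x‖ ^ 2 - f x := by
  rw [strongConcaveOn_iff_convex, ← neg_convexOn_iff]
  congr! 1
  ext x
  simp only [Pi.neg_apply]
  ring

theorem stmt7_general (δ : E → ℝ) (hpos : ∀ x, 0 ≤ δ x)
    (hconv : ConvexOn ℝ Set.univ fun x : E ↦ ‖x‖ ^ 2 - δ x ^ 2) (x y : E) :
    |δ x - δ y| ≤ ‖x - y‖ := by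
  have hconc : StrongConcaveOn Set.univ (-2) fun x ↦ δ x ^ 2 :=
    strongConcaveOn_neg_iff_convexOn.2 (by simpa using hconv)
  have hlip : LipschitzWith 1 fun x ↦ √(δ x ^ 2) :=
    lipschitzWith_sqrt_of_strongConcaveOn (fun x ↦ sq_nonneg (δ x)) (by simpa using hconc)
  simpa [Real.sqrt_sq, hpos, Real.dist_eq, dist_eq_norm] using hlip.dist_le_mul x y

end InnerProductSpace

/-- Every distance-like function is 1-Lipschitz: if `δ : ℝ^d → [0,∞)` is such that
`x ↦ ‖x‖² - δ(x)²` is convex, then `|δ(x) - δ(y)| ≤ ‖x - y‖` for all `x, y`. -/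
theorem stmt7 {d : ℕ} (δ : Euc d → ℝ) (hpos : ∀ x, 0 ≤ δ x)
    (hconv : ConvexOn ℝ Set.univ (fun x : Euc d => ‖x‖ ^ 2 - δ x ^ 2)) :
    ∀ x y : Euc d, |δ x - δ y| ≤ ‖x - y‖ :=
  stmt7_general δ hpos hconv
end
end

section
/- Let K ⊂ ℝ^d be compact, δ a distance-like function, χ : ℝ^d → [0,∞) bounded Lipschitz, R > 0, and E ⊂ ℝ^d a measurable set on which ‖n_{d_K}(x)‖ ≤ R and ‖n_δ(x)‖ ≤ R for almost every x ∈ E. Setting A_{d_K}(x) := n_{d_K}(x) ⊗ n_{d_K}(x) χ(x − n_{d_K}(x)) and A_δ(x) := n_δ(x) ⊗ n_δ(x) χ(x − n_δ(x)), one has ‖∫_E (A_{d_K}(x) − A_δ(x)) dx‖_op ≤ ‖χ‖_BL (R² + 2R) ∫_E ‖n_{d_K}(x) − n_δ(x)‖ dx. -/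
open MeasureTheory Metric Filter
open scoped NNReal

noncomputable section

/-!
For fixed `x`, the map `v ↦ χ (x - v) v ⊗ v` is Lipschitz on the ball of radius `R`: telescope
`s a ⊗ a - t b ⊗ b = (s - t) a ⊗ a + t ((a - b) ⊗ a + b ⊗ (a - b))` with `s = χ (x - a)` and
`t = χ (x - b)`, so that `|s - t| ≤ Lip χ ‖a - b‖`. Integrating this pointwise bound along the two
vector fields gives the theorem.
-/

open InnerProductSpace (rankOne norm_rankOne)

section RankOne

variable {𝕜 V : Type*} [RCLike 𝕜] [SeminormedAddCommGroup V] [InnerProductSpace 𝕜 V]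

theorem rankOne_self_sub_rankOne_self (a b : V) :
    rankOne 𝕜 a a - rankOne 𝕜 b b = rankOne 𝕜 (a - b) a + rankOne 𝕜 b (a - b) := by
  simp only [map_sub, sub_apply, sub_add_sub_cancel]

theorem norm_rankOne_self_sub_rankOne_self_le (a b : V) :
    ‖rankOne 𝕜 a a - rankOne 𝕜 b b‖ ≤ ‖a - b‖ * (‖a‖ + ‖b‖) :=
  calc ‖rankOne 𝕜 a a - rankOne 𝕜 b b‖
      = ‖rankOne 𝕜 (a - b) a + rankOne 𝕜 b (a - b)‖ := by rw [rankOne_self_sub_rankOne_self]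
    _ ≤ ‖rankOne 𝕜 (a - b) a‖ + ‖rankOne 𝕜 b (a - b)‖ := norm_add_le _ _
    _ = ‖a - b‖ * (‖a‖ + ‖b‖) := by rw [norm_rankOne, norm_rankOne]; ring

theorem norm_smul_rankOne_self_sub_smul_rankOne_self_le (s t : 𝕜) (a b : V) :
    ‖s • rankOne 𝕜 a a - t • rankOne 𝕜 b b‖ ≤
      ‖s - t‖ * ‖a‖ ^ 2 + ‖t‖ * (‖a - b‖ * (‖a‖ + ‖b‖)) :=
  calc ‖s • rankOne 𝕜 a a - t • rankOne 𝕜 b b‖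
      = ‖(s - t) • rankOne 𝕜 a a + t • (rankOne 𝕜 a a - rankOne 𝕜 b b)‖ := by
        congr 1; module
    _ ≤ ‖s - t‖ * ‖rankOne 𝕜 a a‖ + ‖t‖ * ‖rankOne 𝕜 a a - rankOne 𝕜 b b‖ := by
        simpa only [norm_smul] using norm_add_le ((s - t) • rankOne 𝕜 a a)
          (t • (rankOne 𝕜 a a - rankOne 𝕜 b b))
    _ ≤ ‖s - t‖ * ‖a‖ ^ 2 + ‖t‖ * (‖a - b‖ * (‖a‖ + ‖b‖)) := by
        rw [norm_rankOne, ← sq]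
        gcongr
        exact norm_rankOne_self_sub_rankOne_self_le a b

end RankOne

section VCM

variable {V : Type*} [SeminormedAddCommGroup V] [InnerProductSpace ℝ V]

/-- The integrand `χ (x - v) v ⊗ v` of the Voronoi covariance measure tested against `χ`, at the
point `x` with displacement `v`. Thus `A_δ(x)` is `vcmIntegrand χ x (nvec δ x)`;
`v ⊗ v` is written `rankOne ℝ v v`, to which `tensor v v` is definitionally equal. -/
def vcmIntegrand (χ : V → ℝ) (x v : V) : V →L[ℝ] V :=
  χ (x - v) • rankOne ℝ v v

theorem continuous_uncurry_vcmIntegrand {χ : V → ℝ} (hχ : Continuous χ) :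
    Continuous (Function.uncurry (vcmIntegrand χ)) :=
  (hχ.comp (continuous_fst.sub continuous_snd)).smul
    (((rankOne ℝ).continuous.comp continuous_snd).clm_apply continuous_snd)

theorem norm_vcmIntegrand_sub_le {χ : V → ℝ} {C R : ℝ} {L : ℝ≥0}
    (hC : ∀ x, |χ x| ≤ C) (hL : LipschitzWith L χ) (x : V) {a b : V} (ha : ‖a‖ ≤ R) (hb : ‖b‖ ≤ R) :
    ‖vcmIntegrand χ x a - vcmIntegrand χ x b‖ ≤ (L * R ^ 2 + C * (2 * R)) * ‖a - b‖ := by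
  have hχ_diff : ‖χ (x - a) - χ (x - b)‖ ≤ L * ‖a - b‖ := by
    simpa only [dist_eq_norm, sub_sub_sub_cancel_left, norm_sub_rev b a] using
      hL.dist_le_mul (x - a) (x - b)
  have hχ_bdd : ‖χ (x - b)‖ ≤ C := hC (x - b)
  calc ‖vcmIntegrand χ x a - vcmIntegrand χ x b‖
      ≤ ‖χ (x - a) - χ (x - b)‖ * ‖a‖ ^ 2 + ‖χ (x - b)‖ * (‖a - b‖ * (‖a‖ + ‖b‖)) :=
        norm_smul_rankOne_self_sub_smul_rankOne_self_le _ _ a b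
    _ ≤ L * ‖a - b‖ * R ^ 2 + C * (‖a - b‖ * (R + R)) := by
        have hC_nonneg : 0 ≤ C := (norm_nonneg _).trans hχ_bdd
        gcongr
    _ = (L * R ^ 2 + C * (2 * R)) * ‖a - b‖ := by ring

theorem norm_vcmIntegrand_sub_le_add_mul {χ : V → ℝ} {C R : ℝ} {L : ℝ≥0}
    (hC : ∀ x, |χ x| ≤ C) (hL : LipschitzWith L χ) (x : V) {a b : V} (ha : ‖a‖ ≤ R) (hb : ‖b‖ ≤ R) :
    ‖vcmIntegrand χ x a - vcmIntegrand χ x b‖ ≤ (C + L) * (R ^ 2 + 2 * R) * ‖a - b‖ := by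
  have hC_nonneg : 0 ≤ C := (abs_nonneg (χ 0)).trans (hC 0)
  have hR_nonneg : 0 ≤ R := (norm_nonneg a).trans ha
  have h_const : L * R ^ 2 + C * (2 * R) ≤ (C + L) * (R ^ 2 + 2 * R) := by
    linarith [mul_nonneg hC_nonneg (sq_nonneg R), mul_nonneg L.coe_nonneg hR_nonneg]
  exact (norm_vcmIntegrand_sub_le hC hL x ha hb).trans (by gcongr)

end VCM

theorem measurable_gradient {𝕜 V : Type*} [RCLike 𝕜] [NormedAddCommGroup V]
    [InnerProductSpace 𝕜 V] [CompleteSpace V] [MeasurableSpace V] [BorelSpace V] (f : V → 𝕜) :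
    Measurable (gradient f) :=
  (InnerProductSpace.toDual 𝕜 V).symm.continuous.measurable.comp (measurable_fderiv 𝕜 f)

theorem measurable_nvec {d : ℕ} (δ : Euc d → ℝ) : Measurable (nvec δ) :=
  (measurable_gradient _).const_smul (1 / 2 : ℝ)

theorem stmt14_general {α V : Type*} [MeasurableSpace α] {μ : Measure α}
    [NormedAddCommGroup V] [InnerProductSpace ℝ V] {p a b : α → V}
    (hp : AEStronglyMeasurable p μ) (ha : AEStronglyMeasurable a μ)
    (hb : AEStronglyMeasurable b μ) {χ : V → ℝ} {C R : ℝ} {L : ℝ≥0}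
    (hC : ∀ x, |χ x| ≤ C) (hL : LipschitzWith L χ)
    (haR : ∀ᵐ x ∂μ, ‖a x‖ ≤ R) (hbR : ∀ᵐ x ∂μ, ‖b x‖ ≤ R)
    (hint : Integrable (fun x => ‖a x - b x‖) μ) :
    Integrable (fun x => vcmIntegrand χ (p x) (a x) - vcmIntegrand χ (p x) (b x)) μ ∧
      ‖∫ x, (vcmIntegrand χ (p x) (a x) - vcmIntegrand χ (p x) (b x)) ∂μ‖ ≤
        (C + L) * (R ^ 2 + 2 * R) * ∫ x, ‖a x - b x‖ ∂μ := by
  have h_cont := continuous_uncurry_vcmIntegrand hL.continuous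
  have h_meas : AEStronglyMeasurable
      (fun x => vcmIntegrand χ (p x) (a x) - vcmIntegrand χ (p x) (b x)) μ :=
    (h_cont.comp_aestronglyMeasurable (hp.prodMk ha)).sub
      (h_cont.comp_aestronglyMeasurable (hp.prodMk hb))
  have h_bound : ∀ᵐ x ∂μ, ‖vcmIntegrand χ (p x) (a x) - vcmIntegrand χ (p x) (b x)‖ ≤
      (C + L) * (R ^ 2 + 2 * R) * ‖a x - b x‖ := by
    filter_upwards [haR, hbR] with x hax hbx
    exact norm_vcmIntegrand_sub_le_add_mul hC hL (p x) hax hbx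
  refine ⟨(hint.const_mul _).mono' h_meas h_bound, ?_⟩
  rw [← integral_const_mul]
  exact norm_integral_le_of_norm_le (hint.const_mul _) h_bound

/-- With `A_{d_K}(x) = n_{d_K}(x) ⊗ n_{d_K}(x) χ(x - n_{d_K}(x))` and similarly `A_δ`,
if `‖n_{d_K}‖ ≤ R` and `‖n_δ‖ ≤ R` a.e. on `E`, then
`‖∫_E (A_{d_K} - A_δ)‖_op ≤ ‖χ‖_BL (R² + 2R) ∫_E ‖n_{d_K} - n_δ‖`, the BL norm being
represented by `Cb + L` (the integrability of `‖n_{d_K} - n_δ‖` on `E` makes the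
right-hand side the intended finite quantity). -/
theorem stmt14 {d : ℕ} (K : Set (Euc d)) (hK : IsCompact K) (hKne : K.Nonempty)
    (δ : Euc d → ℝ) (hδ : DistanceLike δ)
    (χ : Euc d → ℝ) (Cb : ℝ) (L : ℝ≥0) (hχ0 : ∀ x, 0 ≤ χ x)
    (hCb : ∀ x, |χ x| ≤ Cb) (hL : LipschitzWith L χ)
    (R : ℝ) (hR : 0 < R) (E : Set (Euc d)) (hE : MeasurableSet E)
    (hbK : ∀ᵐ x : Euc d, x ∈ E → ‖nvec (fun z => infDist z K) x‖ ≤ R)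
    (hbδ : ∀ᵐ x : Euc d, x ∈ E → ‖nvec δ x‖ ≤ R)
    (hint : IntegrableOn (fun x => ‖nvec (fun z => infDist z K) x - nvec δ x‖) E) :
    ‖∫ x in E,
        (χ (x - nvec (fun z => infDist z K) x) •
            tensor (nvec (fun z => infDist z K) x) (nvec (fun z => infDist z K) x) -
          χ (x - nvec δ x) • tensor (nvec δ x) (nvec δ x))‖ ≤
      (Cb + (L : ℝ)) * (R ^ 2 + 2 * R) *
        ∫ x in E, ‖nvec (fun z => infDist z K) x - nvec δ x‖ :=
  (stmt14_general aestronglyMeasurable_id (measurable_nvec _).aestronglyMeasurable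
    (measurable_nvec δ).aestronglyMeasurable hCb hL ((ae_restrict_iff' hE).mpr hbK)
    ((ae_restrict_iff' hE).mpr hbδ) hint).2
end
end

section
/- Let μ and μ' be probability measures on ℝ^d with finite second moments and let m₀ ∈ (0,1). Then sup_{x∈ℝ^d} |d_{μ,m₀}(x) − d_{μ',m₀}(x)| ≤ (1/√m₀) W₂(μ, μ'). -/
open MeasureTheory Metric Filter
open scoped NNReal ENNReal

noncomputable section

/-- `δ_{μ,m}(x) := inf {r ≥ 0 : μ(B̄(x,r)) ≥ m}`. -/
def pseudoDist {d : ℕ} (μ : Measure (Euc d)) (m : ℝ) (x : Euc d) : ℝ :=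
  sInf {r : ℝ | 0 ≤ r ∧ ENNReal.ofReal m ≤ μ (closedBall x r)}

/-- The distance to the measure `μ` with parameter `m₀`:
`d_{μ,m₀}(x) := ((1/m₀) ∫₀^{m₀} δ_{μ,m}(x)² dm)^{1/2}`. -/
def dtm {d : ℕ} (μ : Measure (Euc d)) (m₀ : ℝ) (x : Euc d) : ℝ :=
  Real.sqrt ((1 / m₀) * ∫ m in (0:ℝ)..m₀, pseudoDist μ m x ^ 2)

/-- The 2-Wasserstein distance `W₂(μ,ν)` (as an extended real), defined as the infimum
of `(∫ ‖x - y‖² dπ)^{1/2}` over all couplings `π` of `μ` and `ν`. -/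
def W2 {d : ℕ} (μ ν : Measure (Euc d)) : ℝ≥0∞ :=
  sInf {c | ∃ π : Measure (Euc d × Euc d), π.map Prod.fst = μ ∧ π.map Prod.snd = ν ∧
    c = (∫⁻ p, (‖p.1 - p.2‖₊ : ℝ≥0∞) ^ 2 ∂π) ^ (1 / 2 : ℝ)}

/-!
For fixed `x`, the function `m ↦ δ_{μ,m}(x)` is the quantile function of the distance to `x` under
`μ`, so `d_{μ,m₀}(x)` is, up to the factor `1 / √m₀`, the `L²` norm of this quantile function over
`(0, m₀]`. A quantile function pushes Lebesgue measure forward to the law itself, and quantiles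
decrease when the measure grows; hence the norm over `(0, m₀]` of the quantile function of `f` under
`P` is the minimum of `‖f‖_{L²(ν)}` over the submeasures `ν ≤ P` of mass `m₀`. For a coupling `π`,
let `f` and `g` be the distances to `x` of its two coordinates and choose `ν ≤ π` optimal for `g`:
Minkowski's inequality in `L²(ν)` for `f ≤ g + dist` bounds one tail norm by the other plus the
transport cost of `π`.
-/

section Quantile

variable {β : Type*} [CompleteLinearOrder β] [MeasurableSpace β]

/-- The left-continuous inverse of the cumulative distribution function `t ↦ ρ (Iic t)` of a
measure on a complete linear order. The supremum of the order is the value at levels `m` exceeding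
the total mass. -/
def quantile (ρ : Measure β) (m : ℝ) : β :=
  sInf {t | ENNReal.ofReal m ≤ ρ (Set.Iic t)}

theorem monotone_quantile (ρ : Measure β) : Monotone (quantile ρ) := fun _ _ h =>
  sInf_le_sInf fun _ ht => (ENNReal.ofReal_le_ofReal h).trans ht

theorem quantile_anti_measure {ρ ρ' : Measure β} (h : ρ ≤ ρ') (m : ℝ) :
    quantile ρ' m ≤ quantile ρ m :=
  sInf_le_sInf fun _ ht => ht.trans (h _)

variable [TopologicalSpace β] [OrderTopology β] [SecondCountableTopology β] [BorelSpace β]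

theorem quantile_le_iff {ρ : Measure β} [IsFiniteMeasure ρ] {m : ℝ} {t : β}
    (hm : ENNReal.ofReal m ≤ ρ Set.univ) :
    quantile ρ m ≤ t ↔ ENNReal.ofReal m ≤ ρ (Set.Iic t) := by
  refine ⟨fun ht => ?_, fun ht => sInf_le ht⟩
  obtain ⟨u, hu_anti, hu_lim, hu_mem⟩ := exists_seq_tendsto_sInf
    (S := {t | ENNReal.ofReal m ≤ ρ (Set.Iic t)}) ⟨⊤, by simpa using hm⟩ (OrderBot.bddBelow _)
  have h_inter : ⋂ n, Set.Iic (u n) = Set.Iic (quantile ρ m) := by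
    rw [← Set.Iic_iInf, iInf_eq_of_tendsto hu_anti hu_lim, quantile]
  have h_lim := tendsto_measure_iInter_atTop (μ := ρ)
    (fun _ => measurableSet_Iic.nullMeasurableSet)
    (fun _ _ hij => Set.Iic_subset_Iic.2 (hu_anti hij)) ⟨0, measure_ne_top _ _⟩
  rw [h_inter] at h_lim
  exact (ge_of_tendsto' h_lim hu_mem).trans (measure_mono (Set.Iic_subset_Iic.2 ht))

theorem measurePreserving_quantile {ρ : Measure β} {m₀ : ℝ}
    (hρ : ρ Set.univ = ENNReal.ofReal m₀) :
    MeasurePreserving (quantile ρ) (volume.restrict (Set.Ioc 0 m₀)) ρ := by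
  have : IsFiniteMeasure ρ := ⟨hρ ▸ ENNReal.ofReal_lt_top⟩
  have h_meas : Measurable (quantile ρ) := (monotone_quantile ρ).measurable
  refine ⟨h_meas, Measure.ext_of_Iic _ _ fun t => ?_⟩
  have h_preimage : quantile ρ ⁻¹' Set.Iic t ∩ Set.Ioc 0 m₀ = Set.Ioc 0 (ρ.real (Set.Iic t)) := by
    ext m
    have h_le : ρ.real (Set.Iic t) ≤ max m₀ 0 := by
      rw [← ENNReal.toReal_ofReal', ← hρ]
      exact measureReal_mono (Set.subset_univ _)
    have h_iff (hm : m ≤ m₀) : quantile ρ m ≤ t ↔ m ≤ ρ.real (Set.Iic t) := by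
      rw [quantile_le_iff (hρ ▸ ENNReal.ofReal_le_ofReal hm),
        ENNReal.ofReal_le_iff_le_toReal (measure_ne_top _ _), measureReal_def]
    simp only [Set.mem_inter_iff, Set.mem_preimage, Set.mem_Iic, Set.mem_Ioc]
    grind
  rw [Measure.map_apply h_meas measurableSet_Iic, Measure.restrict_apply' measurableSet_Ioc,
    h_preimage, Real.volume_Ioc, sub_zero, ofReal_measureReal]

theorem measure_Iio_quantile_le (ρ : Measure β) [IsFiniteMeasure ρ] (m : ℝ) :
    ρ (Set.Iio (quantile ρ m)) ≤ ENNReal.ofReal m := by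
  have h_pres := measurePreserving_quantile (ofReal_measureReal (μ := ρ) (s := Set.univ)).symm
  calc ρ (Set.Iio (quantile ρ m))
      = volume (quantile ρ ⁻¹' Set.Iio (quantile ρ m) ∩ Set.Ioc 0 (ρ.real Set.univ)) := by
        rw [← Measure.restrict_apply' measurableSet_Ioc,
          h_pres.measure_preimage measurableSet_Iio.nullMeasurableSet]
    _ ≤ volume (Set.Ioc 0 m) := measure_mono fun _ h =>
        ⟨h.2.1, ((monotone_quantile ρ).reflect_lt h.1).le⟩
    _ = ENNReal.ofReal m := by rw [Real.volume_Ioc, sub_zero]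

end Quantile

section LowerTail

variable {Ω : Type*} [MeasurableSpace Ω]

theorem exists_measure_between_univ_eq {μ ν : Measure Ω} [IsFiniteMeasure ν] (h : μ ≤ ν)
    {c : ℝ≥0∞} (hμ : μ Set.univ ≤ c) (hν : c ≤ ν Set.univ) :
    ∃ ρ, μ ≤ ρ ∧ ρ ≤ ν ∧ ρ Set.univ = c := by
  have : IsFiniteMeasure μ := isFiniteMeasure_of_le ν h
  set a : ℝ≥0∞ := (c - μ Set.univ) / (ν - μ) Set.univ
  have h_sub : c - μ Set.univ ≤ (ν - μ) Set.univ := by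
    rw [Measure.sub_apply MeasurableSet.univ h]
    exact tsub_le_tsub_right hν _
  have ha : a ≤ 1 := ENNReal.div_le_of_le_mul (by simpa only [one_mul] using h_sub)
  refine ⟨μ + a • (ν - μ), Measure.le_add_right le_rfl, ?_, ?_⟩
  · calc μ + a • (ν - μ) ≤ μ + (1 : ℝ≥0∞) • (ν - μ) := by gcongr
      _ = ν := by rw [one_smul, add_comm, Measure.sub_add_cancel_of_le h]
  · rw [Measure.add_apply, Measure.smul_apply, smul_eq_mul, ENNReal.div_mul_cancel',
      add_tsub_cancel_of_le hμ]
    · exact fun h_zero => le_bot_iff.1 (h_sub.trans_eq h_zero)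
    · exact fun h_top => absurd h_top (measure_ne_top _ _)

theorem exists_le_map_quantile_le {β : Type*} [CompleteLinearOrder β] [TopologicalSpace β]
    [OrderTopology β] [SecondCountableTopology β] [MeasurableSpace β] [BorelSpace β]
    {P : Measure Ω} [IsFiniteMeasure P] {f : Ω → β} (hf : Measurable f) {m₀ : ℝ}
    (hm₀ : ENNReal.ofReal m₀ ≤ P Set.univ) :
    ∃ ν ≤ P, ν Set.univ = ENNReal.ofReal m₀ ∧
      ∀ m ≤ m₀, quantile (ν.map f) m ≤ quantile (P.map f) m := by
  have h_univ : P.map f Set.univ = P Set.univ := Measure.map_apply hf MeasurableSet.univ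
  set R := quantile (P.map f) m₀
  have h_lt : P.restrict (f ⁻¹' Set.Iio R) Set.univ ≤ ENNReal.ofReal m₀ := by
    rw [Measure.restrict_apply_univ, ← Measure.map_apply hf measurableSet_Iio]
    exact measure_Iio_quantile_le _ _
  have h_le : ENNReal.ofReal m₀ ≤ P.restrict (f ⁻¹' Set.Iic R) Set.univ := by
    rw [Measure.restrict_apply_univ, ← Measure.map_apply hf measurableSet_Iic]
    exact (quantile_le_iff (h_univ ▸ hm₀)).1 le_rfl
  -- `ν` keeps all the mass of `P` where `f < R` and just enough of it where `f = R`.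
  obtain ⟨ν, h_ge, hν_le, hν⟩ := exists_measure_between_univ_eq
    (Measure.restrict_mono (Set.preimage_mono Set.Iio_subset_Iic_self) le_rfl) h_lt h_le
  refine ⟨ν, hν_le.trans Measure.restrict_le_self, hν, fun m hm => sInf_le_sInf fun t ht => ?_⟩
  rw [Set.mem_ofPred_eq, Measure.map_apply hf measurableSet_Iic] at ht ⊢
  rcases lt_or_ge t R with htR | htR
  · calc ENNReal.ofReal m ≤ P (f ⁻¹' Set.Iic t) := ht
      _ = P.restrict (f ⁻¹' Set.Iio R) (f ⁻¹' Set.Iic t) := (Measure.restrict_eq_self _ <|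
          Set.preimage_mono (Set.Iic_subset_Iio.2 htR)).symm
      _ ≤ ν (f ⁻¹' Set.Iic t) := h_ge _
  · have h_compl : ν (f ⁻¹' Set.Iic t)ᶜ = 0 := by
      have h_disj : Disjoint (f ⁻¹' Set.Iic t)ᶜ (f ⁻¹' Set.Iic R) :=
        Set.disjoint_compl_left_iff_subset.2 (Set.preimage_mono (Set.Iic_subset_Iic.2 htR))
      refine nonpos_iff_eq_zero.1 ((hν_le _).trans_eq ?_)
      rw [Measure.restrict_apply (hf measurableSet_Iic).compl, h_disj.inter_eq, measure_empty]
    calc ENNReal.ofReal m ≤ ENNReal.ofReal m₀ := ENNReal.ofReal_le_ofReal hm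
      _ = ν (f ⁻¹' Set.Iic t) := by rw [← hν, measure_of_measure_compl_eq_zero h_compl]

theorem eLpNorm_quantile_map {ν : Measure Ω} {f : Ω → ℝ≥0∞} (hf : Measurable f) {m₀ : ℝ}
    (hν : ν Set.univ = ENNReal.ofReal m₀) (p : ℝ≥0∞) :
    eLpNorm (quantile (ν.map f)) p (volume.restrict (Set.Ioc 0 m₀)) = eLpNorm f p ν := by
  have h_univ : ν.map f Set.univ = ENNReal.ofReal m₀ := by
    rw [Measure.map_apply hf MeasurableSet.univ, Set.preimage_univ, hν]
  calc eLpNorm (id ∘ quantile (ν.map f)) p (volume.restrict (Set.Ioc 0 m₀))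
      = eLpNorm id p (ν.map f) := eLpNorm_comp_measurePreserving
        measurable_id.aestronglyMeasurable (measurePreserving_quantile h_univ)
    _ = eLpNorm f p ν :=
        eLpNorm_map_measure measurable_id.aestronglyMeasurable hf.aemeasurable

theorem eLpNorm_quantile_le_add {P : Measure Ω} [IsFiniteMeasure P] {f g h : Ω → ℝ≥0∞}
    (hf : Measurable f) (hg : Measurable g) (hh : Measurable h) (hfgh : f ≤ g + h)
    {p : ℝ≥0∞} (hp : 1 ≤ p) {m₀ : ℝ} (hm₀ : ENNReal.ofReal m₀ ≤ P Set.univ) :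
    eLpNorm (quantile (P.map f)) p (volume.restrict (Set.Ioc 0 m₀)) ≤
      eLpNorm (quantile (P.map g)) p (volume.restrict (Set.Ioc 0 m₀)) + eLpNorm h p P := by
  obtain ⟨ν, hν_le, hν, hν_quantile⟩ := exists_le_map_quantile_le hg hm₀
  have h_tail : eLpNorm g p ν ≤
      eLpNorm (quantile (P.map g)) p (volume.restrict (Set.Ioc 0 m₀)) := by
    rw [← eLpNorm_quantile_map hg hν]
    refine eLpNorm_mono_enorm_ae (ae_restrict_of_forall_mem measurableSet_Ioc fun m hm => ?_)
    simpa only [enorm_eq_self] using hν_quantile m hm.2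
  calc eLpNorm (quantile (P.map f)) p (volume.restrict (Set.Ioc 0 m₀))
      ≤ eLpNorm (quantile (ν.map f)) p (volume.restrict (Set.Ioc 0 m₀)) :=
        eLpNorm_mono_enorm fun m => by
          simpa only [enorm_eq_self] using quantile_anti_measure (Measure.map_mono hν_le hf) m
    _ = eLpNorm f p ν := eLpNorm_quantile_map hf hν p
    _ ≤ eLpNorm (g + h) p ν :=
        eLpNorm_mono_enorm fun ω => by simpa only [enorm_eq_self] using hfgh ω
    _ ≤ eLpNorm g p ν + eLpNorm h p ν :=
        eLpNorm_add_le hg.aestronglyMeasurable hh.aestronglyMeasurable hp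
    _ ≤ eLpNorm (quantile (P.map g)) p (volume.restrict (Set.Ioc 0 m₀)) + eLpNorm h p P :=
        add_le_add h_tail (eLpNorm_mono_measure h hν_le)

end LowerTail

theorem abs_toReal_sub_toReal_le {a b c : ℝ≥0∞} (hb : b ≠ ⊤) (hc : c ≠ ⊤) (hab : a ≤ b + c)
    (hba : b ≤ a + c) : |a.toReal - b.toReal| ≤ c.toReal := by
  have ha : a ≠ ⊤ := ne_top_of_le_ne_top (ENNReal.add_ne_top.2 ⟨hb, hc⟩) hab
  rw [abs_sub_le_iff, sub_le_iff_le_add', sub_le_iff_le_add', ← ENNReal.toReal_add hb hc,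
    ← ENNReal.toReal_add ha hc]
  exact ⟨ENNReal.toReal_mono (ENNReal.add_ne_top.2 ⟨hb, hc⟩) hab,
    ENNReal.toReal_mono (ENNReal.add_ne_top.2 ⟨ha, hc⟩) hba⟩

theorem inv_ofReal_rpow_ne_top {c s : ℝ} (hc : 0 < c) (hs : 0 ≤ s) :
    (ENNReal.ofReal c)⁻¹ ^ s ≠ ⊤ :=
  ENNReal.rpow_ne_top_of_nonneg hs (ENNReal.inv_ne_top.2 (ENNReal.ofReal_pos.2 hc).ne')

section DistToMeasure

variable {α : Type*} [PseudoEMetricSpace α] [MeasurableSpace α]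

/-- The function `m ↦ δ_{μ,m}(x)`, with values in `[0, ∞]`, as the quantile function of the law of
the distance to `x` under `μ`. -/
def distQuantile (μ : Measure α) (x : α) : ℝ → ℝ≥0∞ :=
  quantile (μ.map (edist · x))

/-- The distance to the measure `μ` with parameter `m₀` and exponent `p`, with values in `[0, ∞]`:
the `L^p` norm of `m ↦ δ_{μ,m}(x)` for the uniform probability on `(0, m₀]`. For
`p = ∞` the exponent `1 / p.toReal` of the normalizing factor is `0`, as it should be. -/
def eDistToMeasure (p : ℝ≥0∞) (μ : Measure α) (m₀ : ℝ) (x : α) : ℝ≥0∞ :=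
  (ENNReal.ofReal m₀)⁻¹ ^ (1 / p.toReal) *
    eLpNorm (distQuantile μ x) p (volume.restrict (Set.Ioc 0 m₀))

/-- The `p`-Wasserstein distance `W_p`, with values in `[0, ∞]`; it is `∞` when `μ` and `ν` have no
coupling, that is, when their total masses differ. -/
def eWasserstein (p : ℝ≥0∞) (μ ν : Measure α) : ℝ≥0∞ :=
  ⨅ (π : Measure (α × α)) (_ : π.map Prod.fst = μ) (_ : π.map Prod.snd = ν),
    eLpNorm (fun z => edist z.1 z.2) p π

theorem eWasserstein_map_le (p : ℝ≥0∞) (π : Measure (α × α)) :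
    eWasserstein p (π.map Prod.fst) (π.map Prod.snd) ≤ eLpNorm (fun z => edist z.1 z.2) p π :=
  iInf_le_of_le π (iInf_le_of_le rfl (iInf_le _ rfl))

theorem le_eWasserstein_iff {p : ℝ≥0∞} {μ ν : Measure α} {c : ℝ≥0∞} :
    c ≤ eWasserstein p μ ν ↔ ∀ π : Measure (α × α), π.map Prod.fst = μ → π.map Prod.snd = ν →
      c ≤ eLpNorm (fun z => edist z.1 z.2) p π := by
  simp only [eWasserstein, le_iInf_iff]

theorem eWasserstein_le_swap (p : ℝ≥0∞) (μ ν : Measure α) :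
    eWasserstein p μ ν ≤ eWasserstein p ν μ := by
  refine le_eWasserstein_iff.2 fun π hν hμ => ?_
  have h_fst : (π.map Prod.swap).map Prod.fst = μ := by
    rw [Measure.map_map measurable_fst measurable_swap, ← hμ]; rfl
  have h_snd : (π.map Prod.swap).map Prod.snd = ν := by
    rw [Measure.map_map measurable_snd measurable_swap, ← hν]; rfl
  calc eWasserstein p μ ν ≤ eLpNorm (fun z => edist z.1 z.2) p (π.map Prod.swap) :=
        h_fst ▸ h_snd ▸ eWasserstein_map_le p _
    _ = eLpNorm (fun z => edist z.2 z.1) p π :=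
        MeasurableEquiv.prodComm.measurableEmbedding.eLpNorm_map_measure
    _ = eLpNorm (fun z => edist z.1 z.2) p π := by simp only [edist_comm]

theorem eWasserstein_comm (p : ℝ≥0∞) (μ ν : Measure α) :
    eWasserstein p μ ν = eWasserstein p ν μ :=
  (eWasserstein_le_swap p μ ν).antisymm (eWasserstein_le_swap p ν μ)

variable [OpensMeasurableSpace α]

theorem eWasserstein_le_add {μ ν : Measure α} [IsProbabilityMeasure μ] [IsProbabilityMeasure ν]
    {p : ℝ≥0∞} (hp : 1 ≤ p) (x : α) :
    eWasserstein p μ ν ≤ eLpNorm (edist · x) p μ + eLpNorm (edist · x) p ν := by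
  have h_fst : MeasurePreserving Prod.fst (μ.prod ν) μ := measurePreserving_fst
  have h_snd : MeasurePreserving Prod.snd (μ.prod ν) ν := measurePreserving_snd
  have h_meas : Measurable (edist · x) := measurable_edist_left
  calc eWasserstein p μ ν
      ≤ eLpNorm (fun z => edist z.1 z.2) p (μ.prod ν) :=
        by simpa only [h_fst.map_eq, h_snd.map_eq] using eWasserstein_map_le p (μ.prod ν)
    _ ≤ eLpNorm ((edist · x) ∘ Prod.fst + (edist · x) ∘ Prod.snd) p (μ.prod ν) :=
        eLpNorm_mono_enorm fun z => by
          simpa only [enorm_eq_self] using! edist_triangle_right z.1 z.2 x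
    _ ≤ eLpNorm ((edist · x) ∘ Prod.fst) p (μ.prod ν) +
          eLpNorm ((edist · x) ∘ Prod.snd) p (μ.prod ν) :=
        eLpNorm_add_le (h_meas.comp measurable_fst).aestronglyMeasurable
          (h_meas.comp measurable_snd).aestronglyMeasurable hp
    _ = eLpNorm (edist · x) p μ + eLpNorm (edist · x) p ν := by
        rw [eLpNorm_comp_measurePreserving h_meas.aestronglyMeasurable h_fst,
          eLpNorm_comp_measurePreserving h_meas.aestronglyMeasurable h_snd]

theorem distQuantile_le_iff {μ : Measure α} [IsFiniteMeasure μ] {x : α} {m : ℝ} {r : ℝ≥0∞}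
    (hm : ENNReal.ofReal m ≤ μ Set.univ) :
    distQuantile μ x m ≤ r ↔ ENNReal.ofReal m ≤ μ (closedEBall x r) := by
  have h_meas : Measurable (edist · x) := measurable_edist_left
  rw [distQuantile, quantile_le_iff (by rwa [Measure.map_apply h_meas MeasurableSet.univ]),
    Measure.map_apply h_meas measurableSet_Iic]
  rfl

theorem eLpNorm_distQuantile_le_add [SecondCountableTopology α] {π : Measure (α × α)}
    [IsFiniteMeasure π] {p : ℝ≥0∞} (hp : 1 ≤ p) {m₀ : ℝ}
    (hm₀ : ENNReal.ofReal m₀ ≤ π Set.univ) (x : α) :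
    eLpNorm (distQuantile (π.map Prod.fst) x) p (volume.restrict (Set.Ioc 0 m₀)) ≤
      eLpNorm (distQuantile (π.map Prod.snd) x) p (volume.restrict (Set.Ioc 0 m₀)) +
        eLpNorm (fun z => edist z.1 z.2) p π := by
  have h_meas : Measurable (edist · x) := measurable_edist_left
  rw [distQuantile, distQuantile, Measure.map_map h_meas measurable_fst,
    Measure.map_map h_meas measurable_snd]
  refine eLpNorm_quantile_le_add (h_meas.comp measurable_fst) (h_meas.comp measurable_snd)
    measurable_edist (fun z => ?_) hp hm₀
  exact (edist_triangle z.1 z.2 x).trans_eq (add_comm _ _)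

theorem eDistToMeasure_le_add [SecondCountableTopology α] (μ ν : Measure α) [IsFiniteMeasure μ]
    {p : ℝ≥0∞} (hp : 1 ≤ p) {m₀ : ℝ} (hm₀ : ENNReal.ofReal m₀ ≤ μ Set.univ) (x : α) :
    eDistToMeasure p μ m₀ x ≤
      eDistToMeasure p ν m₀ x + (ENNReal.ofReal m₀)⁻¹ ^ (1 / p.toReal) * eWasserstein p μ ν := by
  rw [eDistToMeasure, eDistToMeasure, ← mul_add]
  gcongr
  rw [← tsub_le_iff_left, le_eWasserstein_iff]
  rintro π rfl rfl
  rw [tsub_le_iff_left]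
  have : IsFiniteMeasure π := Measure.isFiniteMeasure_of_map measurable_fst.aemeasurable
  exact eLpNorm_distQuantile_le_add hp
    (by rwa [Measure.map_apply measurable_fst MeasurableSet.univ] at hm₀) x

theorem stmt19_general [SecondCountableTopology α] (μ ν : Measure α) [IsProbabilityMeasure μ]
    [IsProbabilityMeasure ν] {p : ℝ≥0∞} (hp : 1 ≤ p) {m₀ : ℝ} (hm₀ : m₀ ∈ Set.Ioc 0 1) (x : α)
    (hν : eDistToMeasure p ν m₀ x ≠ ⊤) (hW : eWasserstein p μ ν ≠ ⊤) :
    |(eDistToMeasure p μ m₀ x).toReal - (eDistToMeasure p ν m₀ x).toReal| ≤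
      1 / m₀ ^ (1 / p.toReal) * (eWasserstein p μ ν).toReal := by
  have h_le_one : ENNReal.ofReal m₀ ≤ 1 := ENNReal.ofReal_le_one.2 hm₀.2
  have h_toReal : ((ENNReal.ofReal m₀)⁻¹ ^ (1 / p.toReal)).toReal = 1 / m₀ ^ (1 / p.toReal) := by
    rw [← ENNReal.toReal_rpow, ENNReal.toReal_inv, ENNReal.toReal_ofReal hm₀.1.le,
      Real.inv_rpow hm₀.1.le, one_div (m₀ ^ _)]
  rw [← h_toReal, ← ENNReal.toReal_mul]
  exact abs_toReal_sub_toReal_le hν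
    (ENNReal.mul_ne_top (inv_ofReal_rpow_ne_top hm₀.1 (by positivity)) hW)
    (eDistToMeasure_le_add μ ν hp (measure_univ (μ := μ) ▸ h_le_one) x)
    (eWasserstein_comm p μ ν ▸
      eDistToMeasure_le_add ν μ hp (measure_univ (μ := ν) ▸ h_le_one) x)

end DistToMeasure

section FiniteDistances

variable {α : Type*} [PseudoMetricSpace α] [MeasurableSpace α] [OpensMeasurableSpace α]
  {μ : Measure α} [IsFiniteMeasure μ]

theorem distQuantile_ne_top {m : ℝ} (hm : ENNReal.ofReal m < μ Set.univ) (x : α) :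
    distQuantile μ x m ≠ ⊤ := by
  intro h_top
  have h_meas : Measurable (edist · x) := measurable_edist_left
  have h_le : μ.map (edist · x) (Set.Iio ⊤) ≤ ENNReal.ofReal m :=
    h_top ▸ measure_Iio_quantile_le (μ.map (edist · x)) m
  have h_preimage : (edist · x) ⁻¹' Set.Iio ⊤ = Set.univ :=
    Set.eq_univ_of_forall fun y => edist_lt_top y x
  rw [Measure.map_apply h_meas measurableSet_Iio, h_preimage] at h_le
  exact h_le.not_gt hm

theorem eDistToMeasure_ne_top (p : ℝ≥0∞) {m₀ : ℝ} (hm₀ : 0 < m₀)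
    (hμ : ENNReal.ofReal m₀ < μ Set.univ) (x : α) : eDistToMeasure p μ m₀ x ≠ ⊤ := by
  refine ENNReal.mul_ne_top (inv_ofReal_rpow_ne_top hm₀ (by positivity)) (ne_top_of_le_ne_top
    (memLp_const_enorm (c := distQuantile μ x m₀) ?_).eLpNorm_ne_top
    (eLpNorm_mono_enorm_ae (ae_restrict_of_forall_mem measurableSet_Ioc fun m hm => ?_)))
  · exact (enorm_eq_self (distQuantile μ x m₀)).trans_ne (distQuantile_ne_top hμ x)
  · rw [enorm_eq_self, enorm_eq_self]
    exact monotone_quantile _ hm.2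

end FiniteDistances

section Euclidean

variable {d : ℕ}

theorem pseudoDist_eq_toReal_distQuantile (μ : Measure (Euc d)) [IsProbabilityMeasure μ] {m : ℝ}
    (hm : m < 1) (x : Euc d) : pseudoDist μ m x = (distQuantile μ x m).toReal := by
  have h_univ : ENNReal.ofReal m < μ Set.univ := by
    rwa [measure_univ, ENNReal.ofReal_lt_one]
  have h_mem {r : ℝ} (hr : 0 ≤ r) :
      ENNReal.ofReal m ≤ μ (closedBall x r) ↔ (distQuantile μ x m).toReal ≤ r := by
    rw [← closedEBall_ofReal hr, ← distQuantile_le_iff h_univ.le,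
      ENNReal.le_ofReal_iff_toReal_le (distQuantile_ne_top h_univ x) hr]
  refine IsLeast.csInf_eq ⟨⟨ENNReal.toReal_nonneg, ?_⟩, fun r hr => (h_mem hr.1).1 hr.2⟩
  exact (h_mem ENNReal.toReal_nonneg).2 le_rfl

theorem integral_pseudoDist_sq (μ : Measure (Euc d)) [IsProbabilityMeasure μ] {m₀ : ℝ}
    (hm₀ : m₀ ∈ Set.Ioo 0 1) (x : Euc d) :
    ∫ m in (0 : ℝ)..m₀, pseudoDist μ m x ^ 2 =
      (∫⁻ m in Set.Ioc 0 m₀, distQuantile μ x m ^ 2).toReal := by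
  have h_eq : Set.EqOn (fun m => pseudoDist μ m x ^ 2)
      (fun m => (distQuantile μ x m ^ 2).toReal) (Set.Ioc 0 m₀) := fun m hm => by
    simp only [pseudoDist_eq_toReal_distQuantile μ (hm.2.trans_lt hm₀.2), ENNReal.toReal_pow]
  have h_fin : ∀ m ∈ Set.Ioc 0 m₀, distQuantile μ x m ^ 2 < ⊤ := fun m hm => by
    refine ENNReal.pow_lt_top (distQuantile_ne_top ?_ x).lt_top
    rw [measure_univ, ENNReal.ofReal_lt_one]
    exact hm.2.trans_lt hm₀.2
  rw [intervalIntegral.integral_of_le hm₀.1.le, setIntegral_congr_fun measurableSet_Ioc h_eq,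
    integral_toReal ((monotone_quantile _).measurable.pow_const 2).aemeasurable
      (ae_restrict_of_forall_mem measurableSet_Ioc h_fin)]

theorem eLpNorm_two_eq_lintegral {Ω : Type*} [MeasurableSpace Ω] (P : Measure Ω) (f : Ω → ℝ≥0∞) :
    eLpNorm f 2 P = (∫⁻ ω, f ω ^ 2 ∂P) ^ (1 / 2 : ℝ) := by
  simp [eLpNorm_eq_lintegral_rpow_enorm_toReal]

theorem dtm_eq_toReal_eDistToMeasure (μ : Measure (Euc d)) [IsProbabilityMeasure μ] {m₀ : ℝ}
    (hm₀ : m₀ ∈ Set.Ioo 0 1) (x : Euc d) :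
    dtm μ m₀ x = (eDistToMeasure 2 μ m₀ x).toReal := by
  rw [dtm, integral_pseudoDist_sq μ hm₀, eDistToMeasure, eLpNorm_two_eq_lintegral,
    ENNReal.toReal_ofNat, ← ENNReal.mul_rpow_of_nonneg _ _ one_half_pos.le, ← ENNReal.toReal_rpow,
    ENNReal.toReal_mul, ENNReal.toReal_inv, ENNReal.toReal_ofReal hm₀.1.le, one_div,
    Real.sqrt_eq_rpow]

theorem W2_eq_eWasserstein (μ ν : Measure (Euc d)) : W2 μ ν = eWasserstein 2 μ ν := by
  have h_norm (π : Measure (Euc d × Euc d)) : eLpNorm (fun z => edist z.1 z.2) 2 π =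
      (∫⁻ z, (‖z.1 - z.2‖₊ : ℝ≥0∞) ^ 2 ∂π) ^ (1 / 2 : ℝ) := by
    simp only [eLpNorm_two_eq_lintegral, edist_eq_enorm_sub, enorm_eq_nnnorm]
  refine le_antisymm (le_eWasserstein_iff.2 fun π hμ hν => ?_) (le_sInf ?_)
  · exact sInf_le ⟨π, hμ, hν, h_norm π⟩
  · rintro _ ⟨π, rfl, rfl, rfl⟩
    exact (eWasserstein_map_le 2 π).trans_eq (h_norm π)

theorem eWasserstein_two_ne_top {μ ν : Measure (Euc d)} [IsProbabilityMeasure μ]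
    [IsProbabilityMeasure ν] (hμ : ∫⁻ x, (‖x‖₊ : ℝ≥0∞) ^ 2 ∂μ < ⊤)
    (hν : ∫⁻ x, (‖x‖₊ : ℝ≥0∞) ^ 2 ∂ν < ⊤) :
    eWasserstein 2 μ ν ≠ ⊤ := by
  have h_moment (ρ : Measure (Euc d)) (hρ : ∫⁻ x, (‖x‖₊ : ℝ≥0∞) ^ 2 ∂ρ < ⊤) :
      eLpNorm (edist · 0) 2 ρ ≠ ⊤ := by
    simp only [eLpNorm_two_eq_lintegral, edist_zero_right]
    exact ENNReal.rpow_ne_top_of_nonneg one_half_pos.le hρ.ne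
  exact ne_top_of_le_ne_top (ENNReal.add_ne_top.2 ⟨h_moment μ hμ, h_moment ν hν⟩)
    (eWasserstein_le_add one_le_two 0)

end Euclidean

/-- Stability of the distance to a measure: for probability measures `μ, μ'` with finite
second moments and `m₀ ∈ (0,1)`,
`sup_x |d_{μ,m₀}(x) - d_{μ',m₀}(x)| ≤ (1/√m₀) W₂(μ, μ')`. -/
theorem stmt19 {d : ℕ} (μ μ' : Measure (Euc d))
    [IsProbabilityMeasure μ] [IsProbabilityMeasure μ']
    (hμ : ∫⁻ x, (‖x‖₊ : ℝ≥0∞) ^ 2 ∂μ < ⊤) (hμ' : ∫⁻ x, (‖x‖₊ : ℝ≥0∞) ^ 2 ∂μ' < ⊤)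
    (m₀ : ℝ) (hm₀ : m₀ ∈ Set.Ioo (0 : ℝ) 1) :
    ∀ x : Euc d, |dtm μ m₀ x - dtm μ' m₀ x| ≤ (1 / Real.sqrt m₀) * (W2 μ μ').toReal := by
  have h_lt : ENNReal.ofReal m₀ < μ' Set.univ := by simpa using hm₀.2
  simpa only [dtm_eq_toReal_eDistToMeasure _ hm₀, W2_eq_eWasserstein, ENNReal.toReal_ofNat,
    ← Real.sqrt_eq_rpow] using fun x =>
      stmt19_general μ μ' one_le_two (Set.Ioo_subset_Ioc_self hm₀) x
        (eDistToMeasure_ne_top 2 hm₀.1 h_lt x) (eWasserstein_two_ne_top hμ hμ')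
end
end
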